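/- arXiv:math/0001068 — 6 statements merged into one kernel-verified Lean document; each statement's English description precedes it below -/
import Mathlib

section
/- Let 𝒪 = k[x₁,…,x_m] be a polynomial ring over a field k of characteristic zero and let 𝔥 ⊆ 𝔤 be ideals of 𝒪. Then the image of ∫_𝔥 𝔤 in the quotient ring 𝒪/𝔥 equals the primitive ideal ∫_0 (𝔤/𝔥) of the ideal 𝔤/𝔥 of 𝒪/𝔥 relative to the zero ideal, i.e. (∫_𝔥 𝔤)/𝔥 = {f̄ ∈ 𝔤/𝔥 : ξ(f̄) ∈ 𝔤/𝔥 for all k-derivations ξ of 𝒪/𝔥}. -/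
open Ideal

/-- `ξ ∈ Der_h(O)`: the derivation `ξ` preserves the ideal `h`. -/
def PreservesIdeal {k O : Type*} [CommRing k] [CommRing O] [Algebra k O]
    (h : Ideal O) (xi : Derivation k O O) : Prop :=
  ∀ x ∈ h, xi x ∈ h

/-- The primitive ideal `∫_h g` of `g` relative to `h`: all `f ∈ g` such that
`ξ f ∈ g` for every derivation `ξ` preserving `h`. -/
def primitiveIdeal (k : Type*) {O : Type*} [CommRing k] [CommRing O] [Algebra k O]
    (h g : Ideal O) : Ideal O where
  carrier := {f | f ∈ g ∧ ∀ xi : Derivation k O O, PreservesIdeal h xi → xi f ∈ g}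
  add_mem' := fun {a b} ha hb =>
    ⟨g.add_mem ha.1 hb.1, fun xi hxi => by
      rw [map_add]; exact g.add_mem (ha.2 xi hxi) (hb.2 xi hxi)⟩
  zero_mem' := ⟨g.zero_mem, fun xi _ => by simp⟩
  smul_mem' := fun c f hf =>
    ⟨g.smul_mem c hf.1, fun xi hxi => by
      rw [smul_eq_mul, Derivation.leibniz]
      exact g.add_mem (g.smul_mem _ (hf.2 xi hxi))
        (by rw [smul_eq_mul]; exact Ideal.mul_mem_right _ g hf.1)⟩

/-- The set of elements of `g` whose class in the conormal module `M = g/(g² + h)` is a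
torsion element over `O/g`, i.e. is killed by a non-zero-divisor of `O/g`.  This is the
preimage in `O` of the torsion submodule `T(M)` of `M`. -/
def torsionSet {O : Type*} [CommRing O] (h g : Ideal O) : Set O :=
  {f | f ∈ g ∧ ∃ β : O,
    Ideal.Quotient.mk g β ∈ nonZeroDivisors (O ⧸ g) ∧ β * f ∈ g ^ 2 ⊔ h}

/-!
A derivation `ξ` of `𝒪` preserving `𝔥` descends to `𝒪/𝔥`, and conversely every derivation `η` of
`𝒪/𝔥` is the descent of some `ξ`: the derivation `𝒪 → 𝒪/𝔥` given by `η` corresponds to a linear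
map `Ω[𝒪⁄k] → 𝒪/𝔥`, which factors through `𝒪` because `Ω[𝒪⁄k]` is projective (for a polynomial ring,
free on the `dxᵢ`). Thus the derivations of `𝒪/𝔥` are exactly those induced by `Der_𝔥(𝒪)`, and
modulo `𝔥` the conditions defining the two primitive ideals agree.
-/

open scoped KaehlerDifferential

section Lifting

variable {R A M N : Type*} [CommRing R] [CommRing A] [Algebra R A]
  [AddCommGroup M] [Module R M] [Module A M] [IsScalarTower R A M]
  [AddCommGroup N] [Module R N] [Module A N] [IsScalarTower R A N]

theorem surjective_compDer_of_surjective [Module.Projective A Ω[A⁄R]]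
    {f : M →ₗ[A] N} (hf : Function.Surjective f) :
    Function.Surjective (f.compDer : Derivation R A M → Derivation R A N) := by
  intro d
  obtain ⟨φ, hφ⟩ := Module.projective_lifting_property f d.liftKaehlerDifferential hf
  refine ⟨φ.compDer (KaehlerDifferential.D R A), ?_⟩
  ext a
  calc f (φ (KaehlerDifferential.D R A a))
      = d.liftKaehlerDifferential (KaehlerDifferential.D R A a) := LinearMap.congr_fun hφ _
    _ = d a := d.liftKaehlerDifferential_comp_D a

end Lifting

section Quotient

variable {k O : Type*} [CommRing k] [CommRing O] [Algebra k O] {h g : Ideal O}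

theorem preservesIdeal_bot (xi : Derivation k O O) : PreservesIdeal ⊥ xi := by
  rintro x rfl
  exact map_zero xi

theorem preservesIdeal_iff_mkₐ {xi : Derivation k O O} :
    PreservesIdeal h xi ↔
      ∀ x, Ideal.Quotient.mkₐ k h x = 0 → Ideal.Quotient.mkₐ k h (xi x) = 0 := by
  simp only [PreservesIdeal, Ideal.Quotient.mkₐ_eq_mk, Ideal.Quotient.eq_zero_iff_mem]

theorem preservesIdeal_of_mk_comp_eq {xi : Derivation k O O} {eta : Derivation k (O ⧸ h) (O ⧸ h)}
    (hxi : ∀ f, Ideal.Quotient.mk h (xi f) = eta (Ideal.Quotient.mk h f)) :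
    PreservesIdeal h xi := by
  rw [preservesIdeal_iff_mkₐ]
  intro x hx
  rw [Ideal.Quotient.mkₐ_eq_mk] at hx ⊢
  rw [hxi, hx, map_zero]

/-- The derivation of `O ⧸ h` induced by a derivation of `O` preserving `h`. -/
noncomputable def PreservesIdeal.quotientDerivation {xi : Derivation k O O}
    (hxi : PreservesIdeal h xi) : Derivation k (O ⧸ h) (O ⧸ h) :=
  Derivation.liftOfSurjective (Ideal.Quotient.mkₐ_surjective k h) (preservesIdeal_iff_mkₐ.mp hxi)

theorem PreservesIdeal.quotientDerivation_mk {xi : Derivation k O O}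
    (hxi : PreservesIdeal h xi) (f : O) :
    hxi.quotientDerivation (Ideal.Quotient.mk h f) = Ideal.Quotient.mk h (xi f) :=
  Derivation.liftOfSurjective_apply (Ideal.Quotient.mkₐ_surjective k h)
    (preservesIdeal_iff_mkₐ.mp hxi) f

theorem exists_preservesIdeal_quotientDerivation_eq [Module.Projective O Ω[O⁄k]]
    (eta : Derivation k (O ⧸ h) (O ⧸ h)) :
    ∃ (xi : Derivation k O O) (hxi : PreservesIdeal h xi), hxi.quotientDerivation = eta := by
  obtain ⟨xi, hlift⟩ :=
    surjective_compDer_of_surjective (f := h.mkQ) h.mkQ_surjective (eta.compAlgebraMap O)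
  have hmk (f : O) : Ideal.Quotient.mk h (xi f) = eta (Ideal.Quotient.mk h f) :=
    Derivation.congr_fun hlift f
  have hxi := preservesIdeal_of_mk_comp_eq hmk
  refine ⟨xi, hxi, ?_⟩
  ext x
  obtain ⟨f, rfl⟩ := Ideal.Quotient.mk_surjective x
  rw [hxi.quotientDerivation_mk, hmk]

theorem map_mk_primitiveIdeal_le [Module.Projective O Ω[O⁄k]] :
    (primitiveIdeal k h g).map (Ideal.Quotient.mk h) ≤
      primitiveIdeal k (⊥ : Ideal (O ⧸ h)) (g.map (Ideal.Quotient.mk h)) := by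
  rw [Ideal.map_le_iff_le_comap]
  rintro f ⟨hf, hder⟩
  refine ⟨Ideal.mem_map_of_mem _ hf, fun eta _ => ?_⟩
  obtain ⟨xi, hxi, rfl⟩ := exists_preservesIdeal_quotientDerivation_eq eta
  rw [hxi.quotientDerivation_mk]
  exact Ideal.mem_map_of_mem _ (hder xi hxi)

theorem primitiveIdeal_bot_map_mk_le (hle : h ≤ g) :
    primitiveIdeal k (⊥ : Ideal (O ⧸ h)) (g.map (Ideal.Quotient.mk h)) ≤
      (primitiveIdeal k h g).map (Ideal.Quotient.mk h) := by
  rintro x ⟨hx, hder⟩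
  obtain ⟨f, rfl⟩ := Ideal.Quotient.mk_surjective x
  refine Ideal.mem_map_of_mem _ ⟨(Ideal.mem_quotient_iff_mem hle).mp hx, fun xi hxi => ?_⟩
  rw [← Ideal.mem_quotient_iff_mem hle, ← hxi.quotientDerivation_mk]
  exact hder hxi.quotientDerivation (preservesIdeal_bot _)

end Quotient

theorem statement2_general {k O : Type*} [CommRing k] [CommRing O] [Algebra k O]
    [Module.Projective O Ω[O⁄k]] (h g : Ideal O) (hle : h ≤ g) :
    (primitiveIdeal k h g).map (Ideal.Quotient.mk h) =
      primitiveIdeal k (⊥ : Ideal (O ⧸ h)) (g.map (Ideal.Quotient.mk h)) :=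
  le_antisymm map_mk_primitiveIdeal_le (primitiveIdeal_bot_map_mk_le hle)

/-- In a polynomial ring over a field of characteristic zero, the image of `∫_h g` in
`O/h` is the primitive ideal of `g/h` relative to the zero ideal. -/
theorem statement2 {k : Type*} [Field k] [CharZero k] {m : ℕ}
    (h g : Ideal (MvPolynomial (Fin m) k)) (hle : h ≤ g) :
    (primitiveIdeal k h g).map (Ideal.Quotient.mk h) =
      primitiveIdeal k (⊥ : Ideal (MvPolynomial (Fin m) k ⧸ h))
        (g.map (Ideal.Quotient.mk h)) :=
  statement2_general h g hle
end

section
/- Let 𝒪 be a commutative noetherian algebra of finite type over a commutative ring k, and let 𝔥 ⊆ 𝔤 be ideals of 𝒪 having no embedded primes. Then for any multiplicative set S ⊆ 𝒪, the localization S⁻¹(∫_𝔥 𝔤) is equal to the primitive ideal ∫_{S⁻¹𝔥} (S⁻¹𝔤) of S⁻¹𝔤 relative to S⁻¹𝔥 in the ring S⁻¹𝒪. -/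
open Ideal

/-- An ideal is unmixed (has no embedded primes): every associated prime of `O/I` is a
minimal prime of `I`. -/
def IsUnmixed {O : Type*} [CommRing O] (I : Ideal O) : Prop :=
  associatedPrimes O (O ⧸ I) ⊆ I.minimalPrimes

/-!
Derivations of `O` extend to `S⁻¹O`. Conversely, since `Ω[O⁄k]` is finitely presented, every
derivation of `S⁻¹O` becomes, after multiplication by an element of `S`, the extension of a
derivation of `O`. Containments in `S⁻¹h` and `S⁻¹g` likewise hold in `O` up to one common
denominator, as long as the ideal contained is finitely generated. This allows the denominator to
be chosen so that the derivation of `O` preserves `h`, and also makes a single denominator work for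
all the values `ξ f` at a given `f`, since these generate an ideal of a noetherian ring.
-/

theorem exists_mem_forall_mul_mem_of_le_comap_map {O : Type*} [CommRing O] (S : Submonoid O)
    {L : Type*} [CommRing L] [Algebra O L] [IsLocalization S L] {I J : Ideal O} (hJ : J.FG)
    (hJI : J ≤ (I.map (algebraMap O L)).comap (algebraMap O L)) :
    ∃ s ∈ S, ∀ x ∈ J, s * x ∈ I := by
  induction J, hJ using Submodule.fg_induction with
  | singleton a =>
    obtain ⟨s, hs, hsa⟩ := (IsLocalization.algebraMap_mem_map_algebraMap_iff S L I a).1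
      (hJI (mem_span_singleton_self a))
    refine ⟨s, hs, fun x hx ↦ ?_⟩
    obtain ⟨c, rfl⟩ := mem_span_singleton'.1 hx
    rw [mul_left_comm]
    exact I.mul_mem_left c hsa
  | sup J₁ J₂ _ _ ih₁ ih₂ =>
    obtain ⟨s, hs, hsJ₁⟩ := ih₁ (le_sup_left.trans hJI)
    obtain ⟨t, ht, htJ₂⟩ := ih₂ (le_sup_right.trans hJI)
    refine ⟨s * t, S.mul_mem hs ht, fun x hx ↦ ?_⟩
    obtain ⟨y, hy, z, hz, rfl⟩ := Submodule.mem_sup.1 hx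
    rw [mul_add, mul_right_comm, mul_assoc s t z]
    exact I.add_mem (I.mul_mem_right t (hsJ₁ y hy)) (I.mul_mem_left s (htJ₂ z hz))

section Derivations

variable {k O : Type*} [CommRing k] [CommRing O] [Algebra k O]
  {M N : Type*} [AddCommGroup M] [Module k M] [Module O M] [IsScalarTower k O M]
  [AddCommGroup N] [Module k N] [Module O N] [IsScalarTower k O N]

theorem exists_derivation_compAlgebraMap_eq_of_isLocalization (S : Submonoid O)
    {L : Type*} [CommRing L] [Algebra O L] [IsLocalization S L] [Algebra k L] [IsScalarTower k O L]
    [Module L N] [IsScalarTower O L N] (ξ : Derivation k O N) :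
    ∃ η : Derivation k L N, η.compAlgebraMap O = ξ := by
  have : IsScalarTower k L N := .to₁₃₄ k O L N
  have : IsLocalizedModule S (LinearMap.id : N →ₗ[O] N) := isLocalizedModule_id S N L
  have hunit : ∀ s : S, IsUnit (algebraMap O (Module.End O N) s) :=
    IsLocalizedModule.map_units (LinearMap.id : N →ₗ[O] N)
  let ψ : Ω[L⁄k] →ₗ[O] N :=
    IsLocalizedModule.lift S (KaehlerDifferential.map k k O L) ξ.liftKaehlerDifferential hunit
  refine ⟨(ψ.extendScalarsOfIsLocalization S L).compDer (KaehlerDifferential.D k L), ?_⟩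
  ext x
  have hψ := IsLocalizedModule.lift_apply S (KaehlerDifferential.map k k O L)
    ξ.liftKaehlerDifferential hunit (KaehlerDifferential.D k O x)
  simpa using hψ

theorem exists_compDer_eq_smul_of_isLocalizedModule (S : Submonoid O)
    [Module.FinitePresentation O (Ω[O⁄k])] (f : M →ₗ[O] N) [IsLocalizedModule S f]
    (η : Derivation k O N) :
    ∃ s ∈ S, ∃ ξ : Derivation k O M, f.compDer ξ = s • η := by
  obtain ⟨φ, s, hφ⟩ :=
    Module.FinitePresentation.exists_lift_of_isLocalizedModule S f η.liftKaehlerDifferential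
  refine ⟨s, s.2, φ.compDer (KaehlerDifferential.D k O), ?_⟩
  ext x
  simpa [Submonoid.smul_def] using LinearMap.congr_fun hφ (KaehlerDifferential.D k O x)

end Derivations

section PreservesIdeal

variable {k O : Type*} [CommRing k] [CommRing O] [Algebra k O]
  {L : Type*} [CommRing L] [Algebra O L]

theorem preservesIdeal_span_iff {A : Set O} {ξ : Derivation k O O} :
    PreservesIdeal (span A) ξ ↔ ∀ a ∈ A, ξ a ∈ span A := by
  refine ⟨fun hξ a ha ↦ hξ a (subset_span ha), fun hA x hx ↦ ?_⟩
  induction hx using Submodule.span_induction with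
  | mem a ha => exact hA a ha
  | zero => simp
  | add x y _ _ ihx ihy =>
    rw [map_add]
    exact add_mem ihx ihy
  | smul c x hx ih =>
    rw [smul_eq_mul, Derivation.leibniz]
    exact add_mem (mul_mem_left _ c ih) (mul_mem_right _ _ hx)

theorem exists_smul_preservesIdeal (S : Submonoid O) [IsLocalization S L] {h : Ideal O}
    (hfg : h.FG) {ξ : Derivation k O O}
    (hξ : ∀ x ∈ h, algebraMap O L (ξ x) ∈ h.map (algebraMap O L)) :
    ∃ s ∈ S, PreservesIdeal h (s • ξ) := by
  obtain ⟨A, hA, rfl⟩ := Submodule.fg_def.1 hfg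
  have hξA : span (ξ '' A) ≤ ((span A).map (algebraMap O L)).comap (algebraMap O L) :=
    span_le.2 (Set.forall_mem_image.2 fun a ha ↦ hξ a (subset_span ha))
  obtain ⟨s, hs, hsA⟩ := exists_mem_forall_mul_mem_of_le_comap_map S
    (Submodule.fg_span (hA.image ξ)) hξA
  exact ⟨s, hs, preservesIdeal_span_iff.2 fun a ha ↦
    hsA (ξ a) (subset_span (Set.mem_image_of_mem ξ ha))⟩

variable [Algebra k L]

theorem PreservesIdeal.map {h : Ideal O} {ξ : Derivation k O O} (hξ : PreservesIdeal h ξ)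
    {η : Derivation k L L} (hη : ∀ x, η (algebraMap O L x) = algebraMap O L (ξ x)) :
    PreservesIdeal (h.map (algebraMap O L)) η := by
  refine preservesIdeal_span_iff.2 ?_
  rintro _ ⟨x, hx, rfl⟩
  rw [hη]
  exact mem_map_of_mem _ (hξ x hx)

theorem PreservesIdeal.exists_derivation_algebraMap_eq [IsScalarTower k O L]
    [Module.FinitePresentation O (Ω[O⁄k])] (S : Submonoid O) [IsLocalization S L]
    {h : Ideal O} (hfg : h.FG) {η : Derivation k L L}
    (hη : PreservesIdeal (h.map (algebraMap O L)) η) :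
    ∃ s ∈ S, ∃ ξ : Derivation k O O, PreservesIdeal h ξ ∧
      ∀ x, algebraMap O L (ξ x) = algebraMap O L s * η (algebraMap O L x) := by
  obtain ⟨s, hs, ξ, hξ⟩ := exists_compDer_eq_smul_of_isLocalizedModule S
    (Algebra.linearMap O L) (η.compAlgebraMap O)
  have hξη (x : O) : algebraMap O L (ξ x) = algebraMap O L s * η (algebraMap O L x) := by
    simpa [Algebra.smul_def] using Derivation.congr_fun hξ x
  obtain ⟨t, ht, htξ⟩ := exists_smul_preservesIdeal S (L := L) hfg fun x hx ↦
    hξη x ▸ mul_mem_left _ _ (hη _ (mem_map_of_mem _ hx))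
  refine ⟨t * s, S.mul_mem ht hs, t • ξ, htξ, fun x ↦ ?_⟩
  rw [Derivation.smul_apply, smul_eq_mul, map_mul, hξη, map_mul, mul_assoc]

end PreservesIdeal

section PrimitiveIdeal

variable {k O : Type*} [CommRing k] [CommRing O] [Algebra k O]
  {L : Type*} [CommRing L] [Algebra O L] [Algebra k L] [IsScalarTower k O L]

theorem mul_mem_primitiveIdeal {h g : Ideal O} {s f : O} (hf : f ∈ g)
    (hs : ∀ ξ : Derivation k O O, PreservesIdeal h ξ → s * ξ f ∈ g) :
    s * f ∈ primitiveIdeal k h g := by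
  refine ⟨g.mul_mem_left s hf, fun ξ hξ ↦ ?_⟩
  rw [Derivation.leibniz]
  exact g.add_mem (hs ξ hξ) (g.mul_mem_right _ hf)

theorem map_primitiveIdeal_le [Module.FinitePresentation O (Ω[O⁄k])] (S : Submonoid O)
    [IsLocalization S L] {h : Ideal O} (hfg : h.FG) (g : Ideal O) :
    (primitiveIdeal k h g).map (algebraMap O L) ≤
      primitiveIdeal k (h.map (algebraMap O L)) (g.map (algebraMap O L)) := by
  refine map_le_iff_le_comap.2 fun f hf ↦ ⟨mem_map_of_mem _ hf.1, fun η hη ↦ ?_⟩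
  obtain ⟨s, hs, ξ, hξ, hξη⟩ := hη.exists_derivation_algebraMap_eq S hfg
  have hsηf : algebraMap O L s * η (algebraMap O L f) ∈ g.map (algebraMap O L) :=
    hξη f ▸ mem_map_of_mem _ (hf.2 ξ hξ)
  exact (unit_mul_mem_iff_mem _ (IsLocalization.map_units L ⟨s, hs⟩)).1 hsηf

theorem algebraMap_derivation_mem_map_of_mem_primitiveIdeal (S : Submonoid O)
    [IsLocalization S L] {h g : Ideal O} {f : O}
    (hf : algebraMap O L f ∈
      primitiveIdeal k (h.map (algebraMap O L)) (g.map (algebraMap O L)))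
    {ξ : Derivation k O O} (hξ : PreservesIdeal h ξ) :
    algebraMap O L (ξ f) ∈ g.map (algebraMap O L) := by
  obtain ⟨η, hη⟩ := exists_derivation_compAlgebraMap_eq_of_isLocalization S (L := L)
    ((Algebra.linearMap O L).compDer ξ)
  have hηξ (x : O) : η (algebraMap O L x) = algebraMap O L (ξ x) := Derivation.congr_fun hη x
  exact hηξ f ▸ hf.2 η (hξ.map hηξ)

theorem primitiveIdeal_map_le [IsNoetherianRing O] (S : Submonoid O) [IsLocalization S L]
    (h g : Ideal O) :
    primitiveIdeal k (h.map (algebraMap O L)) (g.map (algebraMap O L)) ≤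
      (primitiveIdeal k h g).map (algebraMap O L) := by
  intro y hy
  obtain ⟨⟨⟨f, hf_mem⟩, s⟩, hys⟩ := (IsLocalization.mem_map_algebraMap_iff S L).1 hy.1
  have hf : algebraMap O L f ∈
      primitiveIdeal k (h.map (algebraMap O L)) (g.map (algebraMap O L)) :=
    hys ▸ mul_mem_right _ _ hy
  have hvalues : span {x | ∃ ξ : Derivation k O O, PreservesIdeal h ξ ∧ ξ f = x} ≤
      (g.map (algebraMap O L)).comap (algebraMap O L) := by
    refine span_le.2 ?_
    rintro _ ⟨ξ, hξ, rfl⟩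
    exact algebraMap_derivation_mem_map_of_mem_primitiveIdeal S hf hξ
  obtain ⟨t, ht, htg⟩ := exists_mem_forall_mul_mem_of_le_comap_map S
    (IsNoetherian.noetherian _) hvalues
  have htf : t * f ∈ primitiveIdeal k h g :=
    mul_mem_primitiveIdeal hf_mem fun ξ hξ ↦ htg (ξ f) (subset_span ⟨ξ, hξ, rfl⟩)
  refine (IsLocalization.mem_map_algebraMap_iff S L).2 ⟨⟨⟨t * f, htf⟩, ⟨t, ht⟩ * s⟩, ?_⟩
  simp only [Submonoid.coe_mul, map_mul, ← hys]
  ring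

end PrimitiveIdeal

theorem statement3_general {k O : Type*} [CommRing k] [CommRing O] [Algebra k O]
    [IsNoetherianRing O] [Module.Finite O (Ω[O⁄k])] (h g : Ideal O)
    (S : Submonoid O) (L : Type*) [CommRing L] [Algebra O L] [IsLocalization S L]
    [Algebra k L] [IsScalarTower k O L] :
    (primitiveIdeal k h g).map (algebraMap O L) =
      primitiveIdeal k (h.map (algebraMap O L)) (g.map (algebraMap O L)) :=
  have : Module.FinitePresentation O (Ω[O⁄k]) := Module.finitePresentation_of_finite O _
  le_antisymm (map_primitiveIdeal_le S (IsNoetherian.noetherian h) g) (primitiveIdeal_map_le S h g)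

/-- The primitive ideal localizes for ideals without embedded primes. -/
theorem statement3 {k O : Type*} [CommRing k] [CommRing O] [Algebra k O]
    [IsNoetherianRing O] [Algebra.FiniteType k O]
    (h g : Ideal O) (hle : h ≤ g) (hh : IsUnmixed h) (hg : IsUnmixed g)
    (S : Submonoid O) (L : Type*) [CommRing L] [Algebra O L] [IsLocalization S L]
    [Algebra k L] [IsScalarTower k O L] :
    (primitiveIdeal k h g).map (algebraMap O L) =
      primitiveIdeal k (h.map (algebraMap O L)) (g.map (algebraMap O L)) :=
  statement3_general h g S L
end

section
/- Let 𝒪 be a polynomial ring over a field k of characteristic zero and let 𝔥 ⊆ 𝔤 be unmixed ideals of 𝒪 with 𝔤 radical, such that the localization of 𝒪/𝔥 at (the image of) every minimal prime of 𝔤 is a regular local ring (equivalently, the Jacobian ideal 𝒥(𝔥) of 𝔥 is not contained in any minimal prime of 𝒪/𝔤). Then the torsion submodule of the conormal module M = 𝔤/(𝔤² + 𝔥) is T(M) = (∫_𝔥 𝔤)/(𝔤² + 𝔥); consequently there is a short exact sequence of 𝒪/𝔤-modules 0 → T(M) → M → 𝔤/∫_𝔥 𝔤 → 0. -/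
open Ideal

/-- A regular local ring: a noetherian local ring whose maximal ideal can be generated by
Krull-dimension many elements. -/
def IsRegularLocal (R : Type*) [CommRing R] : Prop :=
  IsNoetherianRing R ∧ IsLocalRing R ∧ ∃ s : Finset R,
    (Ideal.span (s : Set R)).IsMaximal ∧ (s.card : WithBot ℕ∞) = ringKrullDim R

/-- The localization of `R` at a prime ideal (with the primality assumption explicit). -/
abbrev locAt {R : Type*} [CommRing R] (q : Ideal R) (hq : q.IsPrime) : Type _ :=
  @Localization.AtPrime R _ q hq

/-- The localization of `O/h` at the image of the prime `p` is a regular local ring. -/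
def regularAtImage {O : Type*} [CommRing O] (h p : Ideal O) : Prop :=
  ∀ hP : (p.map (Ideal.Quotient.mk h)).IsPrime,
    IsRegularLocal (locAt (p.map (Ideal.Quotient.mk h)) hP)

/-!
A derivation preserving `h` sends `g² + h` into `g`, so by the Leibniz rule torsion elements of
the conormal module lie in the primitive ideal.

For the converse it suffices, by prime avoidance, to show that `f ∈ ∫_h g` lies in `g² + h` after
localizing at each minimal prime `p` of `g`. As `g` is radical, `g` generates the maximal ideal
`𝔪` of the localization `R`. The residue field of `R` is formally smooth over the perfect field
`k`, so `𝔪/𝔪²` embeds into `κ ⊗ Ω[R⁄k]`, and any elements of `𝔪` that are independent modulo `𝔪²`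
admit dual derivations of `R`. As `R/hR` is regular, `hR` is generated by elements `xᵢ` whose
classes are a basis of the image of `hR` in `𝔪/𝔪²`. If `f ∉ 𝔪² + hR`, some derivation `D` kills
every `xᵢ`, hence preserves `hR`, while `D f = 1`. Clearing denominators gives a derivation that
preserves `h` and sends `f` outside `p`, contradicting `f ∈ ∫_h g`.
-/

open IsLocalRing TensorProduct KaehlerDifferential

theorem exists_isPrime_ge_le_ringKrullDim_quotient {A : Type*} [CommRing A] {J : Ideal A} {d : ℕ}
    (hd : d ≤ ringKrullDim (A ⧸ J)) :
    ∃ Q : Ideal A, Q.IsPrime ∧ J ≤ Q ∧ d ≤ ringKrullDim (A ⧸ Q) := by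
  simp only [ringKrullDim_quotient, Order.le_krullDim_iff] at hd ⊢
  obtain ⟨l, hl⟩ := hd
  exact ⟨l.head.1.asIdeal, l.head.1.isPrime, l.head.2,
    ⟨l.length, fun i => ⟨(l i).1, l.head_le i⟩, fun i => l.step i⟩, hl⟩

theorem ringKrullDim_quotient_le_quotient_sup_span_singleton_add_one {A : Type*} [CommRing A]
    [IsNoetherianRing A] (J : Ideal A) {a : A} (ha : a ∈ Ring.jacobson A) :
    ringKrullDim (A ⧸ J) ≤ ringKrullDim (A ⧸ (J ⊔ span {a})) + 1 := by
  have hmem : Ideal.Quotient.mk J a ∈ Ring.jacobson (A ⧸ J) :=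
    Ring.map_jacobson_le (Ideal.Quotient.mk J) ⟨a, ha, rfl⟩
  have e : ((A ⧸ J) ⧸ span (({Ideal.Quotient.mk J a} : Finset (A ⧸ J)) : Set (A ⧸ J))) ≃+*
      A ⧸ (J ⊔ span {a}) :=
    (quotEquivOfEq (by rw [map_span, Set.image_singleton, Finset.coe_singleton])).trans
      (DoubleQuot.quotQuotEquivQuotSup J (span {a}))
  rw [← ringKrullDim_eq_of_ringEquiv e]
  exact ringKrullDim_le_ringKrullDim_quotient_add_card {Ideal.Quotient.mk J a} (by simpa using hmem)

theorem le_of_le_sup_span_singleton_of_notMem {A : Type*} [CommRing A] {I Q : Ideal A}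
    [Q.IsPrime] (hQ : Q.FG) (hIQ : I ≤ Q) {a : A} (haQ : a ∉ Q)
    (ha : a ∈ (⊥ : Ideal A).jacobson) (hle : Q ≤ I ⊔ span {a}) : Q ≤ I := by
  refine Submodule.le_of_le_smul_of_le_jacobson_bot (I := (⊥ : Ideal A).jacobson) hQ le_rfl
    fun q hq => ?_
  obtain ⟨i, hi, z, hz, rfl⟩ := Submodule.mem_sup.mp (hle hq)
  obtain ⟨z, rfl⟩ := mem_span_singleton'.mp hz
  have hzQ : z ∈ Q :=
    (‹Q.IsPrime›.mem_or_mem ((Ideal.add_mem_iff_right _ (hIQ hi)).mp hq)).resolve_right haQ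
  exact Submodule.add_mem_sup hi (mul_comm z a ▸ Submodule.smul_mem_smul ha hzQ)

-- Induct on `s`: for a prime `Q ⊇ J` with `#s ≤ dim A/Q` and `a ∈ s` outside `Q`, passing from `Q`
-- to `Q ⊔ (a)` lowers the dimension by at most one, so `I ⊔ (a) = Q ⊔ (a)`, whence `I = Q`.
theorem eq_of_card_le_ringKrullDim_quotient {A : Type*} [CommRing A] [IsLocalRing A]
    [IsNoetherianRing A] {I J : Ideal A} (s : Finset A) (hIJ : I ≤ J)
    (hs : I ⊔ span (s : Set A) = maximalIdeal A) (hd : s.card ≤ ringKrullDim (A ⧸ J)) : I = J := by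
  classical
  obtain ⟨Q, hQ, hJQ, hdQ⟩ := exists_isPrime_ge_le_ringKrullDim_quotient hd
  have hIQ : I ≤ Q := hIJ.trans hJQ
  suffices hQI : Q ≤ I from hIJ.antisymm (hJQ.trans hQI)
  by_cases hsQ : (s : Set A) ⊆ Q
  · have hQmax : Q = maximalIdeal A :=
      (le_maximalIdeal hQ.ne_top).antisymm (hs ▸ sup_le hIQ (span_le.mpr hsQ))
    have : Q.IsMaximal := hQmax ▸ maximalIdeal.isMaximal A
    let := Ideal.Quotient.field Q
    rw [ringKrullDim_eq_zero_of_field] at hdQ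
    obtain rfl : s = ∅ := by simpa using hdQ
    exact hQmax.trans_le (by simpa using hs.ge)
  obtain ⟨a, has, haQ⟩ := Set.not_subset.mp hsQ
  have ham : a ∈ maximalIdeal A := hs ▸ mem_sup_right (subset_span has)
  have hdQa : ((s.erase a).card : WithBot ℕ∞) ≤ ringKrullDim (A ⧸ (Q ⊔ span {a})) := by
    have := hdQ.trans (ringKrullDim_quotient_le_quotient_sup_span_singleton_add_one Q (a := a)
      (by rwa [ringJacobson_eq_maximalIdeal]))
    rw [← Finset.card_erase_add_one has] at this
    push_cast at this
    exact ENat.WithBot.add_le_add_one_right_iff.mp this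
  have hIQa : I ⊔ span {a} = Q ⊔ span {a} := by
    refine eq_of_card_le_ringKrullDim_quotient (s.erase a) (sup_le_sup_right hIQ _) ?_ hdQa
    rw [sup_assoc, ← span_union, Set.singleton_union, ← Finset.coe_insert, Finset.insert_erase has,
      hs]
  exact le_of_le_sup_span_singleton_of_notMem (IsNoetherian.noetherian Q) hIQ haQ
    (maximalIdeal_le_jacobson _ ham) (le_sup_left.trans hIQa.ge)
termination_by s.card
decreasing_by classical exact Finset.card_erase_lt_of_mem has

theorem IsRegularLocal.isRegularLocalRing {C : Type*} [CommRing C] (hC : IsRegularLocal C) :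
    IsRegularLocalRing C := by
  obtain ⟨_, _, s, hs, hcard⟩ := hC
  refine .of_spanFinrank_maximalIdeal_le C ?_
  rw [← eq_maximalIdeal hs, ← hcard, ← Set.ncard_coe_finset]
  exact_mod_cast Submodule.spanFinrank_span_le_ncard_of_finite s.finite_toSet

theorem isRegularLocalRing_quotient_map_of_regularAtImage {O : Type*} [CommRing O] {h p : Ideal O}
    [p.IsPrime] (hle : h ≤ p) (hreg : regularAtImage h p) (R : Type*) [CommRing R] [Algebra O R]
    [IsLocalization.AtPrime R p] : IsRegularLocalRing (R ⧸ h.map (algebraMap O R)) := by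
  have hP : (p.map (Ideal.Quotient.mk h)).IsPrime :=
    map_isPrime_of_surjective Ideal.Quotient.mk_surjective (by rwa [mk_ker])
  have hM : Algebra.algebraMapSubmonoid (O ⧸ h) p.primeCompl =
      (p.map (Ideal.Quotient.mk h)).primeCompl := by
    ext y
    obtain ⟨y, rfl⟩ := Ideal.Quotient.mk_surjective y
    rw [mem_primeCompl_iff, mem_quotient_iff_mem hle]
    refine ⟨?_, fun hy => ⟨y, hy, rfl⟩⟩
    rintro ⟨z, hz, hzy⟩ hy
    refine hz ?_
    simpa using p.add_mem (hle (Ideal.Quotient.eq.mp hzy)) hy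
  have : IsLocalization.AtPrime (R ⧸ h.map (algebraMap O R)) (p.map (Ideal.Quotient.mk h)) := by
    rw [IsLocalization.AtPrime, ← hM]
    infer_instance
  have := (hreg hP).isRegularLocalRing
  exact .of_ringEquiv (IsLocalization.algEquiv (p.map (Ideal.Quotient.mk h)).primeCompl
    (Localization.AtPrime (p.map (Ideal.Quotient.mk h))) _).toRingEquiv

theorem mem_span_toCotangent_iff {R ι : Type*} [CommRing R] [IsLocalRing R]
    (x : ι → maximalIdeal R) (y : maximalIdeal R) :
    ((maximalIdeal R).toCotangent y : CotangentSpace R) ∈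
      Submodule.span (ResidueField R) (Set.range fun i => (maximalIdeal R).toCotangent (x i)) ↔
    (y : R) ∈ maximalIdeal R ^ 2 ⊔ span (Set.range fun i => (x i : R)) := by
  have hspan : span (Set.range fun i => (x i : R)) =
      (Submodule.span R (Set.range x)).map (maximalIdeal R).subtype := by
    rw [Submodule.map_span, ← Set.range_comp]
    rfl
  rw [← Submodule.restrictScalars_mem R, Submodule.restrictScalars_span R _ residue_surjective,
    Set.range_comp' (maximalIdeal R).toCotangent x, ← Submodule.map_span, hspan]
  constructor
  · rintro ⟨z, hz, hzy⟩
    rw [← sub_add_cancel (y : R) z]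
    exact Submodule.add_mem_sup (toCotangent_eq _ |>.mp hzy.symm) ⟨z, hz, rfl⟩
  · intro hy
    obtain ⟨w, hw, _, ⟨z, hz, rfl⟩, hwz⟩ := Submodule.mem_sup.mp hy
    refine ⟨z, hz, (toCotangent_eq _).mpr ?_⟩
    rw [← hwz]
    simpa using hw

theorem exists_dual_of_linearIndependent_residueField {R M ι : Type*} [CommRing R] [IsLocalRing R]
    [AddCommGroup M] [Module R M] [Module.FinitePresentation R M] [Module.Flat R M] {v : ι → M}
    (hv : LinearIndependent (ResidueField R) fun i => (1 : ResidueField R) ⊗ₜ[R] v i) :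
    ∃ φ : ι → Module.Dual R M, ∀ i j, φ i (v j) = Finsupp.single j 1 i := by
  let b := Module.Basis.sumExtend hv
  have hmk := TensorProduct.mk_surjective R M (ResidueField R) residue_surjective
  choose w hw using fun i => hmk (b (Sum.inr i))
  have hb : TensorProduct.mk R (ResidueField R) M 1 ∘ Sum.elim v w = b := by
    ext (i | i)
    · simp only [Function.comp_apply, Sum.elim_inl, mk_apply, Module.Basis.sumExtend,
        Equiv.trans_def, Module.Basis.coe_reindex, Module.Basis.coe_extend, b]
      rfl
    · simp [hw]
  obtain ⟨B, hB⟩ := Module.exists_basis_of_basis_baseChange (Sum.elim v w)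
    (hb ▸ b.linearIndependent) (hb ▸ b.span_eq)
    (Module.Flat.rTensor_preserves_injective_linearMap _ Subtype.val_injective)
  refine ⟨fun i => B.coord (Sum.inl i), fun i j => ?_⟩
  rw [show v j = B (Sum.inl j) from (hB (Sum.inl j)).symm]
  classical simp [Finsupp.single_apply]

theorem mem_ker_sq_of_one_tmul_D_eq_zero {k A B : Type*} [CommRing k] [CommRing A] [CommRing B]
    [Algebra k A] [Algebra k B] [Algebra A B] [IsScalarTower k A B] [Algebra.FormallySmooth k A]
    [Algebra.FormallySmooth k B] (hf : Function.Surjective (algebraMap A B)) {x : A}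
    (hx : x ∈ RingHom.ker (algebraMap A B)) (hD : (1 : B) ⊗ₜ[A] D k A x = 0) :
    x ∈ RingHom.ker (algebraMap A B) ^ 2 := by
  -- Formal smoothness of `B` splits the first map of the conormal sequence.
  obtain ⟨l, hl⟩ := (Algebra.FormallySmooth.iff_split_injection (R := k) hf).mp ‹_›
  have h0 := LinearMap.congr_fun hl (toCotangent _ ⟨x, hx⟩)
  rw [LinearMap.comp_apply, kerCotangentToTensor_toCotangent, hD, map_zero] at h0
  exact (toCotangent_eq_zero _ _).mp h0.symm

theorem linearIndependent_one_tmul_D {k R ι : Type*} [CommRing k] [CommRing R] [IsLocalRing R]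
    [Algebra k R] [Algebra.FormallySmooth k R] [Algebra.FormallySmooth k (ResidueField R)]
    {x : ι → maximalIdeal R} (hx : LinearIndependent (ResidueField R) fun i =>
      ((maximalIdeal R).toCotangent (x i) : CotangentSpace R)) :
    LinearIndependent (ResidueField R) fun i => (1 : ResidueField R) ⊗ₜ[R] D k R (x i : R) := by
  rw [linearIndependent_iff'] at hx ⊢
  intro s c hc
  choose r hr using fun i => residue_surjective (c i)
  have hD : (1 : ResidueField R) ⊗ₜ[R] D k R (∑ i ∈ s, r i • x i : maximalIdeal R) = 0 := by
    rw [← hc, Submodule.coe_sum, map_sum, tmul_sum]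
    refine Finset.sum_congr rfl fun i _ => ?_
    have hx0 : residue R (x i) = 0 := (residue_eq_zero_iff _).mpr (x i).2
    rw [Submodule.coe_smul, smul_eq_mul, Derivation.leibniz, tmul_add, tmul_smul, tmul_smul,
      ← algebraMap_smul (ResidueField R) (r i), ← algebraMap_smul (ResidueField R) (x i : R),
      ResidueField.algebraMap_eq, hr, hx0, zero_smul, add_zero]
  have hsq : ((∑ i ∈ s, r i • x i : maximalIdeal R) : R) ∈ maximalIdeal R ^ 2 := by
    have := mem_ker_sq_of_one_tmul_D_eq_zero (k := k) (B := ResidueField R) residue_surjective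
      ((ker_residue (R := R)).ge (∑ i ∈ s, r i • x i : maximalIdeal R).2) hD
    rwa [ResidueField.algebraMap_eq, ker_residue] at this
  refine hx s c ?_
  rw [← (toCotangent_eq_zero _ _).mpr hsq, map_sum]
  refine Finset.sum_congr rfl fun i _ => ?_
  rw [map_smul, ← hr, ← ResidueField.algebraMap_eq, algebraMap_smul]

theorem eq_of_isRegularLocalRing_quotient_of_le_sq_sup {R : Type*} [CommRing R] [IsLocalRing R]
    [IsNoetherianRing R] {I J : Ideal R} [IsRegularLocalRing (R ⧸ J)] (hIJ : I ≤ J)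
    (hJ : J ≤ maximalIdeal R ^ 2 ⊔ I) : I = J := by
  classical
  have hmk : Function.Surjective (Ideal.Quotient.mk J) := Ideal.Quotient.mk_surjective
  have := IsLocalHom.of_surjective _ hmk
  obtain ⟨s, hcard, hs⟩ := Submodule.FG.exists_span_finset_card_eq_spanFinrank
    (IsNoetherian.noetherian (maximalIdeal (R ⧸ J)))
  let t : Finset R := s.image (Function.surjInv hmk)
  have ht : span (t : Set R) ⊔ J = maximalIdeal R := by
    have hmap : (span (t : Set R)).map (Ideal.Quotient.mk J) = maximalIdeal (R ⧸ J) := by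
      rw [← hs, map_span, Finset.coe_image, Set.image_image]
      simp only [Function.surjInv_eq hmk, Set.image_id', submodule_span_eq]
    rw [← maximalIdeal_comap (Ideal.Quotient.mk J), ← hmap, comap_map_of_surjective' _ hmk, mk_ker]
  have hIt : I ⊔ span (t : Set R) = maximalIdeal R := by
    refine le_antisymm (ht ▸ sup_le (hIJ.trans le_sup_right) le_sup_left) ?_
    refine Submodule.le_of_le_smul_of_le_jacobson_bot (I := maximalIdeal R)
      (IsNoetherian.noetherian _) (maximalIdeal_le_jacobson _) ?_
    rw [smul_eq_mul, ← pow_two]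
    conv_lhs => rw [← ht]
    exact sup_le (le_sup_of_le_left le_sup_right)
      (hJ.trans (sup_le le_sup_right (le_sup_of_le_left le_sup_left)))
  refine eq_of_card_le_ringKrullDim_quotient t hIJ hIt ?_
  rw [← IsRegularLocalRing.spanFinrank_maximalIdeal, ← hcard]
  exact_mod_cast Finset.card_image_le

theorem exists_derivation_of_linearIndependent_toCotangent {k R ι : Type*} [CommRing k] [CommRing R]
    [IsLocalRing R] [Algebra k R] [Algebra.EssFiniteType k R] [Algebra.FormallySmooth k R]
    [Algebra.FormallySmooth k (ResidueField R)] {x : ι → maximalIdeal R}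
    (hx : LinearIndependent (ResidueField R) fun i =>
      ((maximalIdeal R).toCotangent (x i) : CotangentSpace R)) :
    ∃ D : ι → Derivation k R R, ∀ i j, D i (x j) = Finsupp.single j 1 i := by
  obtain ⟨φ, hφ⟩ := exists_dual_of_linearIndependent_residueField
    (linearIndependent_one_tmul_D (k := k) hx)
  exact ⟨fun i => (φ i).compDer (D k R), hφ⟩

theorem preservesIdeal_span {k R : Type*} [CommRing k] [CommRing R] [Algebra k R] {s : Set R}
    {D : Derivation k R R} (hD : ∀ x ∈ s, D x ∈ span s) : PreservesIdeal (span s) D := by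
  intro x hx
  induction hx using Submodule.span_induction with
  | mem x hx => exact hD x hx
  | zero => simp
  | add x y _ _ hx hy => exact map_add D x y ▸ add_mem hx hy
  | smul a x hx hDx =>
    rw [smul_eq_mul, Derivation.leibniz]
    exact add_mem (mul_mem_left _ a hDx) (mul_mem_right _ _ hx)

theorem exists_preservesIdeal_apply_eq_one {k R : Type*} [CommRing k] [CommRing R]
    [IsLocalRing R] [IsNoetherianRing R] [Algebra k R] [Algebra.EssFiniteType k R]
    [Algebra.FormallySmooth k R] [Algebra.FormallySmooth k (ResidueField R)] {J : Ideal R}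
    [IsRegularLocalRing (R ⧸ J)] {f : R} (hf : f ∈ maximalIdeal R)
    (hfJ : f ∉ maximalIdeal R ^ 2 ⊔ J) :
    ∃ D : Derivation k R R, PreservesIdeal J D ∧ D f = 1 := by
  have hJm : J ≤ maximalIdeal R := le_maximalIdeal (Quotient.nontrivial_iff.mp inferInstance)
  let y : J → maximalIdeal R := fun z => ⟨z, hJm z.2⟩
  obtain ⟨ι, a, -, hspan, hli⟩ := exists_linearIndependent' (ResidueField R)
    fun i => ((maximalIdeal R).toCotangent (y i) : CotangentSpace R)
  let x : ι → maximalIdeal R := y ∘ a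
  let I : Ideal R := span (Set.range fun i => (x i : R))
  have hIJ : I ≤ J := span_le.mpr (by rintro _ ⟨i, rfl⟩; exact (a i).2)
  have hJI : J ≤ maximalIdeal R ^ 2 ⊔ I := fun z hz => by
    exact (mem_span_toCotangent_iff x (y ⟨z, hz⟩)).mp
      (hspan.ge (Submodule.subset_span ⟨⟨z, hz⟩, rfl⟩))
  have hI : I = J := eq_of_isRegularLocalRing_quotient_of_le_sq_sup hIJ hJI
  have hli' : LinearIndependent (ResidueField R) fun o : Option ι =>
      ((maximalIdeal R).toCotangent (o.elim ⟨f, hf⟩ x) : CotangentSpace R) :=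
    linearIndependent_option.mpr
      ⟨hli, fun hmem => hfJ (hI ▸ (mem_span_toCotangent_iff x ⟨f, hf⟩).mp hmem)⟩
  obtain ⟨D, hD⟩ := exists_derivation_of_linearIndependent_toCotangent (k := k) hli'
  refine ⟨D none, ?_, by simpa using hD none none⟩
  rw [← hI]
  refine preservesIdeal_span ?_
  rintro _ ⟨i, rfl⟩
  have : D none (x i) = 0 := by simpa using hD none (some i)
  exact this ▸ zero_mem _

theorem exists_forall_mul_mem_of_map_le_map {A S : Type*} [CommRing A] [CommRing S] [Algebra A S]
    (M : Submonoid A) [IsLocalization M S] {I J : Ideal A} (hJ : J.FG)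
    (hle : J.map (algebraMap A S) ≤ I.map (algebraMap A S)) : ∃ s ∈ M, ∀ x ∈ J, s * x ∈ I := by
  classical
  obtain ⟨T, rfl⟩ := hJ
  have hT : ∀ x ∈ T, ∃ s ∈ M, s * x ∈ I := fun x hx =>
    (IsLocalization.algebraMap_mem_map_algebraMap_iff M S I x).mp
      (hle (mem_map_of_mem _ (subset_span hx)))
  choose! s hs hsI using hT
  refine ⟨∏ x ∈ T, s x, prod_mem hs, fun x hx => ?_⟩
  suffices span (T : Set A) ≤ Submodule.comap (LinearMap.mulLeft A (∏ x ∈ T, s x)) I from this hx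
  refine span_le.mpr fun x hx => ?_
  simpa [← Finset.prod_erase_mul T s hx, mul_assoc] using mul_mem_left I _ (hsI x hx)

section Localization

variable {k A S : Type*} [CommRing k] [CommRing A] [CommRing S] [Algebra k A] [Algebra k S]
  [Algebra A S] [IsScalarTower k A S] [IsNoetherianRing A] [Algebra.EssFiniteType k A]
  (M : Submonoid A) [IsLocalization M S]

theorem exists_derivation_algebraMap_eq_smul (D : Derivation k S S) :
    ∃ s ∈ M, ∃ ξ : Derivation k A A, ∀ x, algebraMap A S (ξ x) = s • D (algebraMap A S x) := by
  have := Module.finitePresentation_of_finite A (Ω[A⁄k])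
  obtain ⟨φ, s, hφ⟩ := Module.FinitePresentation.exists_lift_of_isLocalizedModule M
    (Algebra.linearMap A S) (D.compAlgebraMap A).liftKaehlerDifferential
  refine ⟨s, s.2, φ.compDer (KaehlerDifferential.D k A), fun x => ?_⟩
  simpa [Submonoid.smul_def] using LinearMap.congr_fun hφ (KaehlerDifferential.D k A x)

theorem exists_preservesIdeal_algebraMap_eq_smul {J : Ideal A} {D : Derivation k S S}
    (hD : PreservesIdeal (J.map (algebraMap A S)) D) :
    ∃ s ∈ M, ∃ ξ : Derivation k A A,
      PreservesIdeal J ξ ∧ ∀ x, algebraMap A S (ξ x) = s • D (algebraMap A S x) := by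
  obtain ⟨s, hs, ξ, hξ⟩ := exists_derivation_algebraMap_eq_smul M D
  obtain ⟨t, ht, htJ⟩ := exists_forall_mul_mem_of_map_le_map (S := S) M
    (IsNoetherian.noetherian ((J.map (algebraMap A S)).comap (algebraMap A S))) map_comap_le
  have hξJ : ∀ x ∈ J, algebraMap A S (ξ x) ∈ J.map (algebraMap A S) := fun x hx =>
    hξ x ▸ Submodule.smul_of_tower_mem _ s (hD _ (mem_map_of_mem _ hx))
  refine ⟨t * s, mul_mem ht hs, t • ξ, fun x hx => htJ _ (hξJ x hx), fun x => ?_⟩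
  rw [Derivation.smul_apply, smul_eq_mul, map_mul, hξ, mul_smul, ← Algebra.smul_def]

end Localization

theorem exists_preservesIdeal_apply_notMem {k O : Type*} [Field k] [PerfectField k] [CommRing O]
    [Algebra k O] [Algebra.EssFiniteType k O] [Algebra.FormallySmooth k O] {h p : Ideal O}
    [p.IsPrime] (hle : h ≤ p) (hreg : regularAtImage h p) {f : O} (hf : f ∈ p)
    (hfh : algebraMap O (Localization.AtPrime p) f ∉
      maximalIdeal (Localization.AtPrime p) ^ 2 ⊔ h.map (algebraMap O (Localization.AtPrime p))) :
    ∃ ξ : Derivation k O O, PreservesIdeal h ξ ∧ ξ f ∉ p := by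
  have := Algebra.EssFiniteType.isNoetherianRing k O
  let R := Localization.AtPrime p
  have : Algebra.EssFiniteType k R := .comp k O R
  have : Algebra.FormallySmooth k R := .comp k O R
  have : Algebra.EssFiniteType k (ResidueField R) := .comp k R _
  have : Algebra.FormallySmooth k (ResidueField R) := .of_perfectField
  have := isRegularLocalRing_quotient_map_of_regularAtImage hle hreg R
  obtain ⟨D, hD, hDf⟩ := exists_preservesIdeal_apply_eq_one (k := k)
    ((IsLocalization.AtPrime.to_map_mem_maximal_iff R p f).mpr hf) hfh
  obtain ⟨s, hs, ξ, hξ, hξD⟩ := exists_preservesIdeal_algebraMap_eq_smul p.primeCompl hD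
  refine ⟨ξ, hξ, (IsLocalization.AtPrime.isUnit_to_map_iff R p (ξ f)).mp ?_⟩
  rw [hξD, hDf, Algebra.smul_def, mul_one]
  exact IsLocalization.map_units R (⟨s, hs⟩ : p.primeCompl)

theorem map_algebraMap_eq_maximalIdeal_of_mem_minimalPrimes {O : Type*} [CommRing O]
    {g p : Ideal O} [p.IsPrime] (hrad : g.IsRadical) (hp : p ∈ g.minimalPrimes) :
    g.map (algebraMap O (Localization.AtPrime p)) = maximalIdeal (Localization.AtPrime p) := by
  rw [← IsLocalization.AtPrime.map_eq_maximalIdeal p,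
    ← IsLocalization.AtPrime.radical_map_of_mem_minimalPrimes _ p g hp,
    ← IsLocalization.map_radical p.primeCompl, hrad.radical]

theorem exists_notMem_mul_mem_of_mem_primitiveIdeal {k O : Type*} [Field k] [PerfectField k]
    [CommRing O] [Algebra k O] [Algebra.EssFiniteType k O] [Algebra.FormallySmooth k O]
    {h g p : Ideal O} (hle : h ≤ g) (hrad : g.IsRadical) (hp : p ∈ g.minimalPrimes)
    (hreg : regularAtImage h p) {f : O} (hf : f ∈ primitiveIdeal k h g) :
    ∃ s ∉ p, s * f ∈ g ^ 2 ⊔ h := by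
  have := hp.isPrime
  refine (IsLocalization.algebraMap_mem_map_algebraMap_iff p.primeCompl
    (Localization.AtPrime p) _ f).mp ?_
  rw [Ideal.map_sup, Ideal.map_pow, map_algebraMap_eq_maximalIdeal_of_mem_minimalPrimes hrad hp]
  by_contra hfh
  obtain ⟨ξ, hξ, hξf⟩ :=
    exists_preservesIdeal_apply_notMem (k := k) (hle.trans hp.le) hreg (hp.le hf.1) hfh
  exact hξf (hp.le (hf.2 ξ hξ))

theorem mk_mem_nonZeroDivisors_of_forall_notMem_minimalPrimes {O : Type*} [CommRing O]
    {g : Ideal O} (hrad : g.IsRadical) {β : O} (hβ : ∀ p ∈ g.minimalPrimes, β ∉ p) :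
    Ideal.Quotient.mk g β ∈ nonZeroDivisors (O ⧸ g) := by
  rw [mem_nonZeroDivisors_iff_right]
  intro x hx
  obtain ⟨x, rfl⟩ := Ideal.Quotient.mk_surjective x
  rw [← map_mul, Ideal.Quotient.eq_zero_iff_mem] at hx
  rw [Ideal.Quotient.eq_zero_iff_mem, ← hrad.radical, ← sInf_minimalPrimes, mem_sInf]
  intro p hp
  exact (hp.isPrime.mem_or_mem (hp.le hx)).resolve_right (hβ p hp)

theorem exists_mk_mem_nonZeroDivisors_of_forall_not_le {O : Type*} [CommRing O]
    {g a : Ideal O} (hrad : g.IsRadical) (hfin : g.minimalPrimes.Finite)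
    (ha : ∀ p ∈ g.minimalPrimes, ¬ a ≤ p) :
    ∃ β ∈ a, Ideal.Quotient.mk g β ∈ nonZeroDivisors (O ⧸ g) := by
  have hsub : ¬ (a : Set O) ⊆ ⋃ p ∈ g.minimalPrimes, (p : Set O) := fun hsub => by
    obtain ⟨p, hp, hap⟩ := (subset_union_prime_finite (f := id) hfin ⊥ ⊥
      fun p hp _ _ => hp.isPrime).mp hsub
    exact ha p hp hap
  obtain ⟨β, hβa, hβ⟩ := Set.not_subset.mp hsub
  exact ⟨β, hβa, mk_mem_nonZeroDivisors_of_forall_notMem_minimalPrimes hrad fun p hp hβp =>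
    hβ (Set.mem_biUnion hp hβp)⟩

theorem PreservesIdeal.apply_mem_of_mem_sq_sup {k O : Type*} [CommRing k] [CommRing O]
    [Algebra k O] {h g : Ideal O} (hle : h ≤ g) {ξ : Derivation k O O} (hξ : PreservesIdeal h ξ)
    {x : O} (hx : x ∈ g ^ 2 ⊔ h) : ξ x ∈ g := by
  obtain ⟨y, hy, z, hz, rfl⟩ := Submodule.mem_sup.mp hx
  rw [map_add]
  refine add_mem ?_ (hle (hξ z hz))
  rw [pow_two] at hy
  refine Submodule.mul_induction_on hy (fun a ha b hb => ?_)
    fun a b ha hb => map_add ξ a b ▸ add_mem ha hb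
  rw [Derivation.leibniz]
  exact add_mem (mul_mem_right _ g ha) (mul_mem_right _ g hb)

theorem torsionSet_subset_primitiveIdeal {k O : Type*} [CommRing k] [CommRing O] [Algebra k O]
    {h g : Ideal O} (hle : h ≤ g) : torsionSet h g ⊆ (primitiveIdeal k h g : Set O) := by
  rintro f ⟨hf, β, hβ, hβf⟩
  refine ⟨hf, fun ξ hξ => ?_⟩
  have hβξ : β * ξ f ∈ g := by
    have := hξ.apply_mem_of_mem_sq_sup hle hβf
    rw [Derivation.leibniz] at this
    exact (Ideal.add_mem_iff_left _ (mul_mem_right _ g hf)).mp this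
  rw [← Ideal.Quotient.eq_zero_iff_mem] at hβξ ⊢
  exact (mem_nonZeroDivisors_iff.mp hβ).1 _ (map_mul (Ideal.Quotient.mk g) β (ξ f) ▸ hβξ)

theorem statement4_general {k O : Type*} [Field k] [PerfectField k] [CommRing O] [Algebra k O]
    [Algebra.EssFiniteType k O] [Algebra.FormallySmooth k O] {h g : Ideal O} (hle : h ≤ g)
    (hrad : g.IsRadical) (hreg : ∀ p ∈ g.minimalPrimes, regularAtImage h p) :
    torsionSet h g = (primitiveIdeal k h g : Set O) := by
  have := Algebra.EssFiniteType.isNoetherianRing k O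
  refine (torsionSet_subset_primitiveIdeal hle).antisymm fun f hf => ⟨hf.1, ?_⟩
  have hcolon : ∀ p ∈ g.minimalPrimes, ¬ (g ^ 2 ⊔ h).colon {f} ≤ p := fun p hp hle_p => by
    obtain ⟨s, hs, hsf⟩ :=
      exists_notMem_mul_mem_of_mem_primitiveIdeal hle hrad hp (hreg p hp) hf
    exact hs (hle_p (Submodule.mem_colon_singleton.mpr hsf))
  obtain ⟨β, hβf, hβ⟩ := exists_mk_mem_nonZeroDivisors_of_forall_not_le hrad
    g.finite_minimalPrimes_of_isNoetherianRing hcolon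
  exact ⟨β, hβ, Submodule.mem_colon_singleton.mp hβf⟩

/-- The torsion of the conormal module `M = g/(g² + h)` is `(∫_h g)/(g² + h)`: an element
of `g` is torsion in `M` iff it belongs to the primitive ideal `∫_h g`. -/
theorem statement4 {k : Type*} [Field k] [CharZero k] {m : ℕ}
    (h g : Ideal (MvPolynomial (Fin m) k)) (hle : h ≤ g)
    (hh : IsUnmixed h) (hg : IsUnmixed g) (hrad : g.IsRadical)
    (hreg : ∀ p ∈ g.minimalPrimes, regularAtImage h p) :
    torsionSet h g = (primitiveIdeal k h g : Set (MvPolynomial (Fin m) k)) := by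
  exact statement4_general hle hrad hreg
end

section
/- Let 𝒪 be a polynomial ring over a field k of characteristic zero and let 𝔥 ⊆ 𝔤 be unmixed ideals of 𝒪 with 𝔤 radical, such that the localization of 𝒪/𝔥 at (the image of) every minimal prime of 𝔤 is a regular local ring. Write ḡ = 𝔤/𝔥 ⊆ 𝒪/𝔥. Then the torsion T(M) of the conormal module M = 𝔤/(𝔤² + 𝔥) is isomorphic as 𝒪/𝔤-module to ḡ⁽²⁾/ḡ², where ḡ⁽²⁾ is the second symbolic power of ḡ. -/
open Ideal

/-- Membership in the second symbolic power of the ideal `J`: `x ∈ J⁽²⁾` iff the image of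
`x` lies in `J² R_p` for every minimal prime `p` of `J`. -/
def memSymbolicSq {R : Type*} [CommRing R] (J : Ideal R) (x : R) : Prop :=
  ∀ p ∈ J.minimalPrimes, ∀ hP : p.IsPrime,
    algebraMap R (locAt p hP) x ∈ (J ^ 2).map (algebraMap R (locAt p hP))

/-! Let `I = (g² + h : f)`. A minimal prime `p` of `g` passes the test for `f ∈ ḡ⁽²⁾` iff `I ⊄ p`,
while `f` is torsion iff `I` contains a non-zero-divisor modulo `g`. As `g` has no embedded primes,
the zero divisors modulo `g` are the union of its finitely many minimal primes, and by prime
avoidance `I` escapes that union iff it escapes each of them. -/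

theorem mk_mem_map_mk_pow_iff {O : Type*} [CommRing O] (h g : Ideal O) (n : ℕ) (f : O) :
    Ideal.Quotient.mk h f ∈ (g.map (Ideal.Quotient.mk h)) ^ n ↔ f ∈ g ^ n ⊔ h := by
  rw [← Ideal.map_pow, Ideal.mem_quotient_iff_mem_sup]

theorem algebraMap_mem_map_atPrime_iff_not_colon_le {R : Type*} [CommRing R] (p : Ideal R)
    [p.IsPrime] (I : Ideal R) (x : R) :
    algebraMap R (Localization.AtPrime p) x ∈ I.map (algebraMap R (Localization.AtPrime p)) ↔
      ¬ I.colon {x} ≤ p := by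
  simp only [IsLocalization.algebraMap_mem_map_algebraMap_iff p.primeCompl,
    Ideal.mem_primeCompl_iff, SetLike.not_le_iff_exists, Submodule.mem_colon_singleton,
    smul_eq_mul, and_comm]

theorem memSymbolicSq_iff_not_colon_le {R : Type*} [CommRing R] {J : Ideal R} {x : R} :
    memSymbolicSq J x ↔ ∀ p ∈ J.minimalPrimes, ¬ (J ^ 2).colon {x} ≤ p := by
  refine forall₂_congr fun p hp ↦ ?_
  have hprime := hp.isPrime
  rw [forall_prop_of_true hprime, algebraMap_mem_map_atPrime_iff_not_colon_le]

theorem comap_mk_colon_map_mk_pow {O : Type*} [CommRing O] (h g : Ideal O) (n : ℕ) (f : O) :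
    (((g.map (Ideal.Quotient.mk h)) ^ n).colon {Ideal.Quotient.mk h f}).comap
      (Ideal.Quotient.mk h) = (g ^ n ⊔ h).colon {f} := by
  ext β
  simp only [Ideal.mem_comap, Submodule.mem_colon_singleton, smul_eq_mul, ← map_mul,
    mk_mem_map_mk_pow_iff]

theorem memSymbolicSq_map_mk_iff_not_colon_le {O : Type*} [CommRing O] {h g : Ideal O}
    (hle : h ≤ g) {f : O} :
    memSymbolicSq (g.map (Ideal.Quotient.mk h)) (Ideal.Quotient.mk h f) ↔
      ∀ p ∈ g.minimalPrimes, ¬ (g ^ 2 ⊔ h).colon {f} ≤ p := by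
  have minimalPrimes_eq := Ideal.comap_minimalPrimes_eq_of_surjective
    (Ideal.Quotient.mk_surjective (I := h)) (g.map (Ideal.Quotient.mk h))
  rw [Ideal.comap_map_mk hle] at minimalPrimes_eq
  simp only [memSymbolicSq_iff_not_colon_le, minimalPrimes_eq, Set.forall_mem_image,
    ← comap_mk_colon_map_mk_pow,
    Ideal.comap_le_comap_iff_of_surjective _ Ideal.Quotient.mk_surjective]

theorem minimalPrimes_subset_associatedPrimes_quotient {O : Type*} [CommRing O]
    [IsNoetherianRing O] (g : Ideal O) : g.minimalPrimes ⊆ associatedPrimes O (O ⧸ g) := by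
  simpa only [Ideal.annihilator_quotient] using
    Module.associatedPrimes.minimalPrimes_annihilator_subset_associatedPrimes O (O ⧸ g)

theorem algebraMap_mem_nonZeroDivisors_iff_isSMulRegular {R A : Type*} [CommRing R] [CommRing A]
    [Algebra R A] {r : R} : algebraMap R A r ∈ nonZeroDivisors A ↔ IsSMulRegular A r := by
  simp only [mem_nonZeroDivisors_iff_left, isSMulRegular_iff_right_eq_zero_of_smul,
    Algebra.smul_def]

theorem IsUnmixed.mk_mem_nonZeroDivisors_iff {O : Type*} [CommRing O] [IsNoetherianRing O]
    {g : Ideal O} (hg : IsUnmixed g) {β : O} :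
    Ideal.Quotient.mk g β ∈ nonZeroDivisors (O ⧸ g) ↔ ∀ p ∈ g.minimalPrimes, β ∉ p := by
  have zeroDivisors_eq := biUnion_associatedPrimes_eq_compl_regular O (O ⧸ g)
  rw [hg.antisymm (minimalPrimes_subset_associatedPrimes_quotient g)] at zeroDivisors_eq
  rw [← Ideal.Quotient.algebraMap_eq, algebraMap_mem_nonZeroDivisors_iff_isSMulRegular]
  simpa using (not_congr (Set.ext_iff.mp zeroDivisors_eq β)).symm

theorem exists_mem_forall_notMem_iff_forall_not_le {R : Type*} [CommRing R] {s : Set (Ideal R)}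
    (hs : s.Finite) (hprime : ∀ p ∈ s, p.IsPrime) {I : Ideal R} :
    (∃ x ∈ I, ∀ p ∈ s, x ∉ p) ↔ ∀ p ∈ s, ¬ I ≤ p := by
  have prime_avoidance :=
    I.subset_union_prime_finite hs (f := id) ⊥ ⊥ fun p hp _ _ ↦ hprime p hp
  simpa [Set.not_subset] using not_congr prime_avoidance

theorem IsUnmixed.mem_torsionSet_iff_not_colon_le {O : Type*} [CommRing O] [IsNoetherianRing O]
    {h g : Ideal O} (hg : IsUnmixed g) {f : O} :
    f ∈ torsionSet h g ↔ f ∈ g ∧ ∀ p ∈ g.minimalPrimes, ¬ (g ^ 2 ⊔ h).colon {f} ≤ p := by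
  refine and_congr_right fun _ ↦ ?_
  rw [← exists_mem_forall_notMem_iff_forall_not_le g.finite_minimalPrimes_of_isNoetherianRing
    fun p hp ↦ hp.isPrime]
  simp only [hg.mk_mem_nonZeroDivisors_iff, Submodule.mem_colon_singleton, smul_eq_mul, and_comm]

theorem statement5_general {O : Type*} [CommRing O] [IsNoetherianRing O] (h g : Ideal O)
    (hle : h ≤ g) (hg : IsUnmixed g) :
    torsionSet h g =
      {f | f ∈ g ∧ memSymbolicSq (g.map (Ideal.Quotient.mk h)) (Ideal.Quotient.mk h f)} ∧
    ∀ f : O, Ideal.Quotient.mk h f ∈ (g.map (Ideal.Quotient.mk h)) ^ 2 ↔ f ∈ g ^ 2 ⊔ h := by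
  refine ⟨Set.ext fun f ↦ ?_, mk_mem_map_mk_pow_iff h g 2⟩
  rw [hg.mem_torsionSet_iff_not_colon_le, Set.mem_ofPred_eq,
    memSymbolicSq_map_mk_iff_not_colon_le hle]

/-- The torsion of the conormal module `M = g/(g² + h)` is isomorphic to `ḡ⁽²⁾/ḡ²` via the
canonical projection: an element `f ∈ g` is torsion in `M` iff its image in `O/h` lies in
the second symbolic power of `ḡ = g/h`, and the kernel of the induced map corresponds to
`ḡ²`. -/
theorem statement5 {k : Type*} [Field k] [CharZero k] {m : ℕ}
    (h g : Ideal (MvPolynomial (Fin m) k)) (hle : h ≤ g)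
    (hh : IsUnmixed h) (hg : IsUnmixed g) (hrad : g.IsRadical)
    (hreg : ∀ p ∈ g.minimalPrimes, regularAtImage h p) :
    torsionSet h g =
      {f | f ∈ g ∧ memSymbolicSq (g.map (Ideal.Quotient.mk h)) (Ideal.Quotient.mk h f)} ∧
    ∀ f : MvPolynomial (Fin m) k,
      Ideal.Quotient.mk h f ∈ (g.map (Ideal.Quotient.mk h)) ^ 2 ↔ f ∈ g ^ 2 ⊔ h :=
  statement5_general h g hle hg
end

section
/- Let 𝔤 be a radical ideal of a commutative noetherian ring 𝒪 generated by an 𝒪-regular sequence g₁,…,g_n. For an integer 1 ≤ t ≤ n set 𝔤* = (g₁,…,g_t) + (g_{t+1},…,g_n)². Then the set of associated primes of 𝒪/𝔤* equals the set of associated primes of 𝒪/𝔤. -/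
open Ideal

/-!
Let `I = (f₁, …, fₙ)` with `f` weakly regular, let `S` be a set of indices, and let `J` be generated
by the `fᵢ` with `i ∉ S` and the products `fᵢ fⱼ` with `i, j ∈ S`. Consider `T : Rⁿ → R` with
`T a = ∑ aᵢ fᵢ`. For every family `f`, `J` is the image under `T` of the vectors whose coordinates
in `S` lie in `I`; weak regularity puts all coordinates of the vectors in `ker T` in `I`, so these
vectors are the whole preimage of `J`. Hence `I / J ≅ (R / I)^S`, and the exact sequence
`0 → (R / I)^S → R / J → R / I` shows that `R / J` and `R / I` have the same associated primes
as soon as `S` is nonempty.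
-/

section LinearMap

variable {R M P : Type*} [Ring R] [AddCommGroup M] [Module R M] [AddCommGroup P] [Module R P]

theorem injective_mapQ_comap (T : P →ₗ[R] M) (J : Submodule R M) :
    Function.Injective ((J.comap T).mapQ J T le_rfl) := by
  rw [← LinearMap.ker_eq_bot, Submodule.ker_mapQ, Submodule.mkQ_map_self]

theorem exact_mapQ_comap_factor (T : P →ₗ[R] M) {J : Submodule R M}
    (hJ : J ≤ LinearMap.range T) :
    Function.Exact ((J.comap T).mapQ J T le_rfl) (Submodule.factor hJ) := by
  rw [LinearMap.exact_iff, Submodule.ker_mapQ, Submodule.comap_id, Submodule.range_mapQ]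

end LinearMap

/-- The quotient of a product by the vectors whose coordinates in `S` lie in given submodules `N i`
is the product over `S` of the quotients by `N i`: a version of `Submodule.quotientPi` relative to a
set of coordinates. -/
noncomputable def quotientPiSetEquiv {R ι : Type*} [Ring R] {M : ι → Type*}
    [∀ i, AddCommGroup (M i)] [∀ i, Module R (M i)] (S : Set ι) (N : ∀ i, Submodule R (M i)) :
    ((∀ i, M i) ⧸ Submodule.pi S N) ≃ₗ[R] ∀ i : S, M i ⧸ N i :=
  let coords : (∀ i, M i) →ₗ[R] ∀ i : S, M i ⧸ N i :=
    LinearMap.pi fun i => (N i).mkQ ∘ₗ LinearMap.proj (i : ι)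
  have ker_coords : LinearMap.ker coords = Submodule.pi S N := by
    ext x
    simp [coords, funext_iff]
  have coords_surjective : Function.Surjective coords := by
    classical
    intro y
    choose x hx using fun i => (N i).mkQ_surjective (if h : i ∈ S then y ⟨i, h⟩ else 0)
    exact ⟨x, funext fun i => (hx i).trans (dif_pos i.2)⟩
  (Submodule.quotEquivOfEq _ _ ker_coords.symm).trans
    (coords.quotKerEquivOfSurjective coords_surjective)

theorem associatedPrimes_pi (R : Type*) [CommSemiring R] {ι : Type*} [Finite ι] (M : ι → Type*)
    [∀ i, AddCommMonoid (M i)] [∀ i, Module R (M i)] :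
    associatedPrimes R (∀ i, M i) = ⋃ i, associatedPrimes R (M i) := by
  classical
  cases nonempty_fintype ι
  refine subset_antisymm ?_ (Set.iUnion_subset fun i =>
    associatedPrimes.subset_of_injective (f := LinearMap.single R M i) (Pi.single_injective i))
  rintro P ⟨hP, x, hx⟩
  have hcolon : (⊥ : Submodule R (∀ i, M i)).colon {x} =
      Finset.univ.inf fun i => (⊥ : Submodule R (M i)).colon {x i} := by
    ext r
    simp [Submodule.mem_finsetInf, Submodule.mem_colon_singleton, funext_iff]
  have hinf : P = Finset.univ.inf fun i => ((⊥ : Submodule R (M i)).colon {x i}).radical := by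
    rw [hx, hcolon, ← Ideal.radicalInfTopHom_apply, map_finset_inf]
    rfl
  obtain ⟨i, -, hi⟩ := Ideal.eq_inf_of_isPrime_inf (hinf ▸ hP)
  exact Set.mem_iUnion.mpr ⟨i, hP, x i, hinf.trans hi.symm⟩

theorem associatedPrimes_quotient_pi_set {R ι M : Type*} [CommRing R] [Finite ι]
    [AddCommGroup M] [Module R M] {S : Set ι} (hS : S.Nonempty) (N : Submodule R M) :
    associatedPrimes R ((ι → M) ⧸ Submodule.pi S fun _ => N) = associatedPrimes R (M ⧸ N) := by
  have := hS.to_subtype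
  rw [LinearEquiv.AssociatedPrimes.eq (quotientPiSetEquiv S fun _ => N), associatedPrimes_pi,
    Set.iUnion_const]

section GeneratingFamily

section CommSemiring

variable {R ι : Type*} [CommSemiring R] (f : ι → R) (S : Set ι)

theorem span_image_compl_sup_sq_le_span_range :
    span (f '' Sᶜ) ⊔ span (f '' S) ^ 2 ≤ span (Set.range f) :=
  sup_le (span_mono (Set.image_subset_range f _))
    ((pow_le_self two_ne_zero).trans (span_mono (Set.image_subset_range f _)))

variable [Fintype ι]

theorem map_linearCombination_pi_le :
    (Submodule.pi S fun _ => span (Set.range f)).map (Fintype.linearCombination R f) ≤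
      span (f '' Sᶜ) ⊔ span (f '' S) ^ 2 := by
  have hsplit : span (Set.range f) = span (f '' Sᶜ) ⊔ span (f '' S) := by
    rw [← span_union, ← Set.image_union, Set.compl_union_self, Set.image_univ]
  rintro _ ⟨a, ha, rfl⟩
  refine sum_mem fun i _ => ?_
  by_cases hi : i ∈ S
  · obtain ⟨x, hx, y, hy, hxy⟩ := Submodule.mem_sup.mp (hsplit ▸ ha i hi)
    rw [← hxy, smul_eq_mul, add_mul, sq]
    exact Submodule.add_mem_sup (mul_mem_right _ _ hx)
      (mul_mem_mul hy (subset_span (Set.mem_image_of_mem f hi)))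
  · exact mul_mem_left _ _ (mem_sup_left (subset_span (Set.mem_image_of_mem f hi)))

theorem span_image_compl_sup_sq_le_map_linearCombination_pi :
    span (f '' Sᶜ) ⊔ span (f '' S) ^ 2 ≤
      (Submodule.pi S fun _ => span (Set.range f)).map (Fintype.linearCombination R f) := by
  classical
  have hS : span (f '' S) ≤ span (Set.range f) := span_mono (Set.image_subset_range f S)
  refine sup_le (span_le.mpr ?_) ?_
  · rintro _ ⟨j, hj, rfl⟩
    refine ⟨Pi.single j 1, fun i hi => ?_, by simp⟩
    simp [ne_of_mem_of_not_mem hi hj]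
  · rw [sq, mul_le]
    intro r hr s hs
    obtain ⟨c, rfl⟩ := mem_span_range_iff_exists_fun.mp (hS hs)
    exact ⟨r • c, fun i _ => mul_mem_right _ _ (hS hr),
      map_smul (Fintype.linearCombination R f) r c⟩

theorem map_linearCombination_pi_eq :
    (Submodule.pi S fun _ => span (Set.range f)).map (Fintype.linearCombination R f) =
      span (f '' Sᶜ) ⊔ span (f '' S) ^ 2 :=
  (map_linearCombination_pi_le f S).antisymm
    (span_image_compl_sup_sq_le_map_linearCombination_pi f S)

end CommSemiring

variable {R ι : Type*} [CommRing R] [Fintype ι] (f : ι → R) (S : Set ι)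

theorem comap_linearCombination_eq_pi
    (hker : LinearMap.ker (Fintype.linearCombination R f) ≤
      Submodule.pi Set.univ fun _ => span (Set.range f)) :
    Submodule.comap (Fintype.linearCombination R f) (span (f '' Sᶜ) ⊔ span (f '' S) ^ 2) =
      Submodule.pi S fun _ => span (Set.range f) := by
  rw [← map_linearCombination_pi_eq, Submodule.comap_map_eq, sup_eq_left]
  exact hker.trans fun _ ha i _ => ha i trivial

theorem associatedPrimes_quotient_span_image_compl_sup_sq
    (hker : LinearMap.ker (Fintype.linearCombination R f) ≤
      Submodule.pi Set.univ fun _ => span (Set.range f)) :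
    associatedPrimes R (R ⧸ (span (f '' Sᶜ) ⊔ span (f '' S) ^ 2)) =
      associatedPrimes R (R ⧸ span (Set.range f)) := by
  obtain rfl | hS := S.eq_empty_or_nonempty
  · rw [Set.compl_empty, Set.image_univ, Set.image_empty, span_empty, bot_pow two_ne_zero,
      sup_bot_eq]
  set J := span (f '' Sᶜ) ⊔ span (f '' S) ^ 2
  set T := Fintype.linearCombination R f
  have hrange : LinearMap.range T = span (Set.range f) := Fintype.range_linearCombination R f
  have hJ : J ≤ LinearMap.range T := hrange ▸ span_image_compl_sup_sq_le_span_range f S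
  have hass : associatedPrimes R ((ι → R) ⧸ Submodule.comap T J) =
      associatedPrimes R (R ⧸ span (Set.range f)) := by
    rw [comap_linearCombination_eq_pi f S hker, associatedPrimes_quotient_pi_set hS]
  rw [← hass]
  refine subset_antisymm ?_ (associatedPrimes.subset_of_injective (injective_mapQ_comap T J))
  have hunion := associatedPrimes.subset_union_of_exact (injective_mapQ_comap T J)
    (exact_mapQ_comap_factor T hJ)
  rwa [hrange, ← hass, Set.union_self] at hunion

end GeneratingFamily

section WeaklyRegular

open RingTheory.Sequence

variable {R : Type*} [CommRing R] {n : ℕ}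

theorem isWeaklyRegular_ofFn_succ_iff (f : Fin (n + 1) → R) :
    IsWeaklyRegular R (List.ofFn f) ↔
      IsWeaklyRegular R (List.ofFn (Fin.init f)) ∧
        IsSMulRegular (R ⧸ span (Set.range (Fin.init f))) (f (Fin.last n)) := by
  have hspan : ofList (List.ofFn (Fin.init f)) • (⊤ : Ideal R) = span (Set.range (Fin.init f)) := by
    rw [smul_eq_mul, mul_top, ofList]
    simp only [List.mem_ofFn, Set.range]
  rw [List.ofFn_succ', List.concat_eq_append, isWeaklyRegular_append_iff,
    isWeaklyRegular_singleton_iff]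
  exact and_congr_right' (by rw [← hspan]; rfl)

theorem mem_span_range_of_isWeaklyRegular_of_sum_mul_eq_zero {f : Fin n → R}
    (hf : IsWeaklyRegular R (List.ofFn f)) {a : Fin n → R} (ha : ∑ i, a i * f i = 0) (i : Fin n) :
    a i ∈ span (Set.range f) := by
  induction n with
  | zero => exact i.elim0
  | succ n ih =>
    obtain ⟨hinit, hlast⟩ := (isWeaklyRegular_ofFn_succ_iff f).mp hf
    have hle : span (Set.range (Fin.init f)) ≤ span (Set.range f) :=
      span_mono (Set.range_comp_subset_range Fin.castSucc f)
    rw [Fin.sum_univ_castSucc] at ha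
    have ha_last : a (Fin.last n) ∈ span (Set.range (Fin.init f)) := by
      refine mem_of_isSMulRegular_quotient_of_smul_mem hlast ?_
      rw [smul_eq_mul, mul_comm, eq_neg_of_add_eq_zero_right ha]
      exact neg_mem (sum_mem fun j _ => mul_mem_left _ _ (subset_span (Set.mem_range_self j)))
    obtain ⟨c, hc⟩ := mem_span_range_iff_exists_fun.mp ha_last
    -- Substituting `a_last = ∑ cⱼ fⱼ` gives a relation between the first `n` members.
    have hrel : ∑ j : Fin n, (a j.castSucc + c j * f (Fin.last n)) * Fin.init f j = 0 := by
      rw [← ha, ← hc, Finset.sum_mul, ← Finset.sum_add_distrib]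
      exact Finset.sum_congr rfl fun j _ => by rw [Fin.init]; ring
    refine Fin.lastCases (hle ha_last) (fun j => ?_) i
    exact (Ideal.add_mem_iff_left _ (mul_mem_left _ _ (subset_span (Set.mem_range_self _)))).mp
      (hle (ih hinit hrel j))

theorem statement6_general (f : Fin n → R) (hf : IsWeaklyRegular R (List.ofFn f))
    (S : Set (Fin n)) :
    associatedPrimes R (R ⧸ (span (f '' Sᶜ) ⊔ span (f '' S) ^ 2)) =
      associatedPrimes R (R ⧸ span (Set.range f)) :=
  associatedPrimes_quotient_span_image_compl_sup_sq f S fun _ ha i _ =>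
    mem_span_range_of_isWeaklyRegular_of_sum_mul_eq_zero hf ha i

end WeaklyRegular

theorem range_comp_castLE_eq_image_compl {α : Type*} {n t : ℕ} (f : Fin n → α) (htn : t ≤ n) :
    (Set.range fun j : Fin t => f (Fin.castLE htn j)) = f '' {i : Fin n | t ≤ (i : ℕ)}ᶜ := by
  rw [Set.range_comp', Fin.range_castLE]
  ext; simp

/-- If a radical ideal `g` is generated by a regular sequence `g₁, …, gₙ` and
`g* = (g₁, …, g_t) + (g_{t+1}, …, gₙ)²`, then `Ass(O/g*) = Ass(O/g)`. -/
theorem statement6 {O : Type*} [CommRing O] [IsNoetherianRing O]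
    {n : ℕ} (gs : Fin n → O)
    (hregseq : RingTheory.Sequence.IsRegular O (List.ofFn gs))
    (g : Ideal O) (hgen : g = Ideal.span (Set.range gs)) (hrad : g.IsRadical)
    (t : ℕ) (ht1 : 1 ≤ t) (htn : t ≤ n) :
    associatedPrimes O
        (O ⧸ (Ideal.span (Set.range fun j : Fin t => gs (Fin.castLE htn j)) ⊔
          (Ideal.span (gs '' {i : Fin n | t ≤ (i : ℕ)})) ^ 2)) =
      associatedPrimes O (O ⧸ g) := by
  rw [hgen, range_comp_castLE_eq_image_compl gs htn]
  exact statement6_general gs hregseq.toIsWeaklyRegular _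
end

section
/- Under the hypotheses of the preceding statement (𝒪 polynomial ring over a field of characteristic zero; 𝔥 ⊆ 𝔤 with 𝔥 unmixed, 𝔤 radical and generated by an 𝒪-regular sequence g₁,…,g_n; localizations of 𝒪/𝔥 at all minimal primes of 𝔤 regular; images of g₁,…,g_t lie in T(M); for every associated prime 𝔭 of 𝒪/𝔤 the images of g_{t+1},…,g_n generate (𝔤/𝔥)_𝔭̄ as a complete intersection), the quotient N = M/T(M) is a free 𝒪/𝔤-module with basis the images of g_{t+1},…,g_n, and M ≅ T(M) ⊕ N as 𝒪/𝔤-modules. -/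
open Ideal

/-- The `(t+1)`-st through `n`-th members `g_{t+1}, …, g_n` of a family `g_1, …, g_n`. -/
def tailFam {O : Type*} {n : ℕ} (gs : Fin n → O) (t : ℕ) (j : Fin (n - t)) : O :=
  gs ⟨t + (j : ℕ), by have := j.isLt; omega⟩

/-- The images of `g_{t+1}, …, g_n` in the localization of `O/h` at the image of the
prime `p` form a regular sequence and generate the localization of `g/h` there, i.e. they
generate it as a complete intersection ideal. -/
def generatesAsCI {O : Type*} [CommRing O] (h g : Ideal O) {n : ℕ}
    (gs : Fin n → O) (t : ℕ) (p : Ideal O) : Prop :=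
  ∀ hP : (p.map (Ideal.Quotient.mk h)).IsPrime,
    RingTheory.Sequence.IsRegular (locAt (p.map (Ideal.Quotient.mk h)) hP)
      (List.ofFn fun j : Fin (n - t) =>
        algebraMap (O ⧸ h) (locAt (p.map (Ideal.Quotient.mk h)) hP)
          (Ideal.Quotient.mk h (tailFam gs t j))) ∧
    Ideal.span (Set.range fun j : Fin (n - t) =>
        algebraMap (O ⧸ h) (locAt (p.map (Ideal.Quotient.mk h)) hP)
          (Ideal.Quotient.mk h (tailFam gs t j))) =
      (g.map (Ideal.Quotient.mk h)).map
        (algebraMap (O ⧸ h) (locAt (p.map (Ideal.Quotient.mk h)) hP))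

/-!
Over the localization of `O/h` at an associated prime `p` of `O/g`, the ideal generated by the
regular sequence `g_{t+1}, …, g_n` is the localization of `g/h`, so a combination of these elements
that lies in `g² + h` has its coefficients in `g` locally at `p`: relations modulo the square of an
ideal generated by a regular sequence have all their coefficients in that ideal. The associated
primes of `O/g` detect membership in `g`, hence `g_{t+1}, …, g_n` are independent over `O/g` in
`M/T(M)`. They also generate it, since `g_1, …, g_t` are torsion. Independence puts every torsion
combination of them in `g²`, so they span a complement of `T(M)` in `M`.
-/

theorem mem_span_range_smul_iff_exists_sum {R M ι : Type*} [CommSemiring R] [AddCommMonoid M]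
    [Module R M] [Fintype ι] {x : ι → R} {N : Submodule R M} {y : M} :
    y ∈ Ideal.span (Set.range x) • N ↔ ∃ d : ι → M, (∀ i, d i ∈ N) ∧ ∑ i, x i • d i = y := by
  constructor
  · intro hy
    induction hy using Submodule.smul_induction_on' with
    | smul r hr n hn =>
      obtain ⟨c, rfl⟩ := Ideal.mem_span_range_iff_exists_fun.mp hr
      refine ⟨fun i => c i • n, fun i => N.smul_mem _ hn, ?_⟩
      rw [Finset.sum_smul]
      exact Finset.sum_congr rfl fun i _ => by rw [smul_smul, mul_comm]
    | add y _ z _ hy hz =>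
      obtain ⟨d, hd, rfl⟩ := hy
      obtain ⟨e, he, rfl⟩ := hz
      exact ⟨d + e, fun i => N.add_mem (hd i) (he i), by
        simp only [Pi.add_apply, smul_add, Finset.sum_add_distrib]⟩
  · rintro ⟨d, hd, rfl⟩
    exact sum_mem fun i _ =>
      Submodule.smul_mem_smul (Ideal.subset_span (Set.mem_range_self i)) (hd i)

section WeaklyRegular

open RingTheory.Sequence

variable {R M : Type*} [CommRing R] [AddCommGroup M] [Module R M]

theorem mem_span_range_smul_top_of_sum_smul_eq_zero {r : ℕ} {x : Fin r → R}
    (hx : IsWeaklyRegular M (List.ofFn x)) {y : Fin r → M} (hy : ∑ j, x j • y j = 0)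
    (j : Fin r) : y j ∈ Ideal.span (Set.range x) • (⊤ : Submodule R M) := by
  induction r with
  | zero => exact j.elim0
  | succ r ih =>
    set I := Ideal.span (Set.range fun i : Fin r => x i.castSucc)
    have hI : Ideal.ofList (List.ofFn fun i : Fin r => x i.castSucc) = I :=
      congrArg Ideal.span (Set.ext fun _ => List.mem_ofFn)
    rw [List.ofFn_succ_last, isWeaklyRegular_append_iff, isWeaklyRegular_singleton_iff, hI] at hx
    obtain ⟨hinit, hlast⟩ := hx
    have hle : I • (⊤ : Submodule R M) ≤ Ideal.span (Set.range x) • ⊤ :=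
      Submodule.smul_mono_left (Ideal.span_mono (Set.range_comp_subset_range Fin.castSucc x))
    rw [Fin.sum_univ_castSucc] at hy
    have hy_last : y (Fin.last r) ∈ I • (⊤ : Submodule R M) := by
      refine mem_of_isSMulRegular_quotient_of_smul_mem hlast ?_
      rw [eq_neg_of_add_eq_zero_right hy]
      exact neg_mem (mem_span_range_smul_iff_exists_sum.mpr ⟨_, fun _ => trivial, rfl⟩)
    obtain ⟨d, -, hd⟩ := mem_span_range_smul_iff_exists_sum.mp hy_last
    -- Substituting `y_r = ∑ x_i d_i` turns the relation into one among `x_0, …, x_{r-1}`.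
    have hrel : ∑ i : Fin r, x i.castSucc • (y i.castSucc + x (Fin.last r) • d i) = 0 := by
      rw [← hy, ← hd, Finset.smul_sum, ← Finset.sum_add_distrib]
      exact Finset.sum_congr rfl fun i _ => by rw [smul_add, smul_comm]
    refine Fin.lastCases (hle hy_last) (fun i => ?_) j
    have hxd : x (Fin.last r) • d i ∈ Ideal.span (Set.range x) • (⊤ : Submodule R M) :=
      Submodule.smul_mem_smul (Ideal.subset_span (Set.mem_range_self _)) trivial
    exact (add_mem_cancel_right hxd).mp (hle (ih hinit hrel i))

theorem mem_span_range_smul_top_of_sum_smul_mem_sq_smul_top {r : ℕ} {x : Fin r → R}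
    (hx : IsWeaklyRegular M (List.ofFn x)) {y : Fin r → M}
    (hy : ∑ j, x j • y j ∈ Ideal.span (Set.range x) ^ 2 • (⊤ : Submodule R M)) (j : Fin r) :
    y j ∈ Ideal.span (Set.range x) • (⊤ : Submodule R M) := by
  rw [pow_two, Submodule.mul_smul] at hy
  obtain ⟨d, hd, hsum⟩ := mem_span_range_smul_iff_exists_sum.mp hy
  have hrel : ∑ i, x i • (y i - d i) = 0 := by
    simp only [smul_sub, Finset.sum_sub_distrib, hsum, sub_self]
  exact (Submodule.sub_mem_iff_left _ (hd j)).mp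
    (mem_span_range_smul_top_of_sum_smul_eq_zero hx hrel j)

theorem exists_mul_mem_of_sum_mul_mem_sq_of_isLocalization {A B : Type*} [CommRing A]
    [CommRing B] [Algebra A B] (S : Submonoid A) [IsLocalization S B] {I : Ideal A}
    {r : ℕ} {x : Fin r → A}
    (hx : IsWeaklyRegular B (List.ofFn fun j => algebraMap A B (x j)))
    (hI : Ideal.span (Set.range fun j => algebraMap A B (x j)) = I.map (algebraMap A B))
    {a : Fin r → A} (ha : ∑ j, a j * x j ∈ I ^ 2) (j : Fin r) :
    ∃ s ∈ S, s * a j ∈ I := by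
  have hsum : ∑ j, algebraMap A B (x j) • algebraMap A B (a j) ∈
      Ideal.span (Set.range fun j => algebraMap A B (x j)) ^ 2 • (⊤ : Submodule B B) := by
    rw [hI, ← Ideal.map_pow, smul_eq_mul, Ideal.mul_top]
    simpa only [map_sum, map_mul, smul_eq_mul, mul_comm] using
      Ideal.mem_map_of_mem (algebraMap A B) ha
  have hmem := mem_span_range_smul_top_of_sum_smul_mem_sq_smul_top hx hsum j
  rwa [hI, smul_eq_mul, Ideal.mul_top,
    IsLocalization.algebraMap_mem_map_algebraMap_iff S] at hmem

end WeaklyRegular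

theorem eq_zero_of_forall_associatedPrimes {R M : Type*} [CommRing R] [IsNoetherianRing R]
    [AddCommGroup M] [Module R M] {x : M}
    (hx : ∀ p ∈ associatedPrimes R M, ∃ s ∉ p, s • x = 0) : x = 0 := by
  by_contra hne
  obtain ⟨p, hp, hle⟩ := exists_le_isAssociatedPrime_of_isNoetherianRing R x hne
  obtain ⟨s, hs, hsx⟩ := hx p hp
  exact hs (hle (Submodule.mem_colon_singleton.mpr hsx))

section Conormal

variable {O : Type*} [CommRing O] {h g : Ideal O} {n : ℕ} {gs : Fin n → O} {t : ℕ}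

/-- The preimage in `g` of the torsion submodule `T(M)` of `M = g/(g² + h)`, that is, `torsionSet`
as an ideal of `O`. -/
def torsionIdeal (h g : Ideal O) : Ideal O where
  carrier := torsionSet h g
  zero_mem' := ⟨g.zero_mem, 1, by simp only [map_one, one_mem], by simp only [mul_zero, zero_mem]⟩
  add_mem' := by
    rintro a b ⟨ha, β, hβ, hβa⟩ ⟨hb, γ, hγ, hγb⟩
    refine ⟨add_mem ha hb, β * γ, by rw [map_mul]; exact mul_mem hβ hγ, ?_⟩
    rw [show β * γ * (a + b) = γ * (β * a) + β * (γ * b) by ring]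
    exact add_mem (Ideal.mul_mem_left _ _ hβa) (Ideal.mul_mem_left _ _ hγb)
  smul_mem' := by
    rintro c a ⟨ha, β, hβ, hβa⟩
    exact ⟨Ideal.mul_mem_left _ _ ha, β, hβ, by
      rw [smul_eq_mul, mul_left_comm]; exact Ideal.mul_mem_left _ _ hβa⟩

theorem span_range_le_sup_span_range_tailFam {J : Ideal O}
    (hJ : ∀ i : Fin n, (i : ℕ) < t → gs i ∈ J) :
    Ideal.span (Set.range gs) ≤ J ⊔ Ideal.span (Set.range (tailFam gs t)) := by
  refine Ideal.span_le.mpr (Set.range_subset_iff.mpr fun i => ?_)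
  rcases lt_or_ge (i : ℕ) t with hlt | hge
  · exact Ideal.mem_sup_left (hJ i hlt)
  · have hi : tailFam gs t ⟨i - t, by omega⟩ = gs i :=
      congrArg gs (Fin.ext (Nat.add_sub_of_le hge))
    exact Ideal.mem_sup_right (Ideal.subset_span ⟨_, hi⟩)

theorem exists_sub_sum_mul_tailFam_mem_torsionSet
    (htorsion : ∀ i : Fin n, (i : ℕ) < t → gs i ∈ torsionSet h g) {f : O}
    (hf : f ∈ Ideal.span (Set.range gs)) :
    ∃ c : Fin (n - t) → O, f - ∑ j, c j * tailFam gs t j ∈ torsionSet h g := by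
  obtain ⟨a, ha, b, hb, rfl⟩ := Submodule.mem_sup.mp
    (span_range_le_sup_span_range_tailFam (J := torsionIdeal h g) htorsion hf)
  obtain ⟨c, rfl⟩ := Ideal.mem_span_range_iff_exists_fun.mp hb
  exact ⟨c, by rwa [add_sub_cancel_right]⟩

theorem generatesAsCI.exists_notMem_mul_mem {p : Ideal O} [p.IsPrime] (hhg : h ≤ g) (hgp : g ≤ p)
    (hci : generatesAsCI h g gs t p) {c : Fin (n - t) → O}
    (hc : ∑ j, c j * tailFam gs t j ∈ g ^ 2 ⊔ h) (j : Fin (n - t)) :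
    ∃ s ∉ p, s * c j ∈ g := by
  have hP : (p.map (Ideal.Quotient.mk h)).IsPrime :=
    Ideal.map_isPrime_of_surjective Ideal.Quotient.mk_surjective
      (by rw [Ideal.mk_ker]; exact hhg.trans hgp)
  obtain ⟨hreg, hspan⟩ := hci hP
  have hsum : ∑ j, Ideal.Quotient.mk h (c j) * Ideal.Quotient.mk h (tailFam gs t j) ∈
      g.map (Ideal.Quotient.mk h) ^ 2 := by
    have hmem := Ideal.mem_map_of_mem (Ideal.Quotient.mk h) hc
    rw [Ideal.map_sup, Ideal.map_quotient_self, sup_bot_eq, Ideal.map_pow] at hmem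
    simpa only [map_sum, map_mul] using hmem
  obtain ⟨s', hs', hmem⟩ := exists_mul_mem_of_sum_mul_mem_sq_of_isLocalization
    (p.map (Ideal.Quotient.mk h)).primeCompl hreg.toIsWeaklyRegular hspan hsum j
  obtain ⟨s, rfl⟩ := Ideal.Quotient.mk_surjective s'
  rw [← map_mul, Ideal.mem_quotient_iff_mem hhg] at hmem
  exact ⟨s, fun hs => hs' (Ideal.mem_map_of_mem _ hs), hmem⟩

variable [IsNoetherianRing O]

theorem mem_of_sum_mul_tailFam_mem_sq_sup (hhg : h ≤ g)
    (hci : ∀ p ∈ associatedPrimes O (O ⧸ g), generatesAsCI h g gs t p) {c : Fin (n - t) → O}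
    (hc : ∑ j, c j * tailFam gs t j ∈ g ^ 2 ⊔ h) (j : Fin (n - t)) : c j ∈ g := by
  refine Ideal.Quotient.eq_zero_iff_mem.mp
    (eq_zero_of_forall_associatedPrimes (R := O) fun p hp => ?_)
  have : p.IsPrime := hp.isPrime
  have hgp : g ≤ p := by
    simpa only [Ideal.annihilator_quotient, Submodule.annihilator_top] using hp.annihilator_le
  obtain ⟨s, hs, hsc⟩ := (hci p hp).exists_notMem_mul_mem hhg hgp hc j
  exact ⟨s, hs, Ideal.Quotient.eq_zero_iff_mem.mpr hsc⟩

theorem mem_of_sum_mul_tailFam_mem_torsionSet (hhg : h ≤ g)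
    (hci : ∀ p ∈ associatedPrimes O (O ⧸ g), generatesAsCI h g gs t p) {c : Fin (n - t) → O}
    (hc : ∑ j, c j * tailFam gs t j ∈ torsionSet h g) (j : Fin (n - t)) : c j ∈ g := by
  obtain ⟨-, β, hβ, hβc⟩ := hc
  have hβc_sum : ∑ j, β * c j * tailFam gs t j ∈ g ^ 2 ⊔ h := by
    simpa only [Finset.mul_sum, mul_assoc] using hβc
  have hβj : β * c j ∈ g := mem_of_sum_mul_tailFam_mem_sq_sup hhg hci hβc_sum j
  rw [← Ideal.Quotient.eq_zero_iff_mem, map_mul] at hβj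
  exact Ideal.Quotient.eq_zero_iff_mem.mp ((mul_left_mem_nonZeroDivisors_eq_zero_iff hβ).mp hβj)

end Conormal

theorem statement8_general {O : Type*} [CommRing O] [IsNoetherianRing O] {h g : Ideal O}
    (hle : h ≤ g) {n : ℕ} {gs : Fin n → O} (hgen : g = Ideal.span (Set.range gs)) {t : ℕ}
    (htorsion : ∀ i : Fin n, (i : ℕ) < t → gs i ∈ torsionSet h g)
    (hci : ∀ p ∈ associatedPrimes O (O ⧸ g), generatesAsCI h g gs t p) :
    (∀ f ∈ g, ∃ c : Fin (n - t) → O, f - ∑ j, c j * tailFam gs t j ∈ torsionSet h g) ∧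
    (∀ c : Fin (n - t) → O, (∑ j, c j * tailFam gs t j) ∈ torsionSet h g → ∀ j, c j ∈ g) ∧
    (∀ c : Fin (n - t) → O, (∑ j, c j * tailFam gs t j) ∈ torsionSet h g →
      (∑ j, c j * tailFam gs t j) ∈ g ^ 2 ⊔ h) := by
  have hindep (c : Fin (n - t) → O) (hc : ∑ j, c j * tailFam gs t j ∈ torsionSet h g) :
      ∀ j, c j ∈ g :=
    mem_of_sum_mul_tailFam_mem_torsionSet hle hci hc
  have htail (j : Fin (n - t)) : tailFam gs t j ∈ g :=
    hgen ▸ Ideal.subset_span (Set.mem_range_self _)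
  refine ⟨fun f hf => exists_sub_sum_mul_tailFam_mem_torsionSet htorsion (hgen ▸ hf), hindep,
    fun c hc => Ideal.mem_sup_left (Ideal.sum_mem _ fun j _ => ?_)⟩
  rw [pow_two]
  exact Ideal.mul_mem_mul (hindep c hc j) (htail j)

/-- Under the conditions of Proposition `basic`, `N = M/T(M)` is free over `O/g` with the
images of `g_{t+1}, …, gₙ` as a basis, and `M ≅ T(M) ⊕ N` (internally: every element of
`M` is a torsion element plus a combination of the basis, the basis is independent over
`O/g`, and a combination of the basis that is torsion is zero in `M`). -/
theorem statement8 {k : Type*} [Field k] [CharZero k] {m : ℕ}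
    (h g : Ideal (MvPolynomial (Fin m) k)) (hle : h ≤ g)
    (hh : IsUnmixed h) (hrad : g.IsRadical)
    {n : ℕ} (gs : Fin n → MvPolynomial (Fin m) k)
    (hregseq : RingTheory.Sequence.IsRegular (MvPolynomial (Fin m) k) (List.ofFn gs))
    (hgen : g = Ideal.span (Set.range gs))
    (hreg : ∀ p ∈ g.minimalPrimes, regularAtImage h p)
    (t : ℕ) (htn : t ≤ n)
    (h1 : ∀ i : Fin n, (i : ℕ) < t → gs i ∈ torsionSet h g)
    (h2 : ∀ p ∈ associatedPrimes (MvPolynomial (Fin m) k) (MvPolynomial (Fin m) k ⧸ g),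
      generatesAsCI h g gs t p) :
    (∀ f ∈ g, ∃ c : Fin (n - t) → MvPolynomial (Fin m) k,
        f - ∑ j, c j * tailFam gs t j ∈ torsionSet h g) ∧
    (∀ c : Fin (n - t) → MvPolynomial (Fin m) k,
        (∑ j, c j * tailFam gs t j) ∈ torsionSet h g → ∀ j, c j ∈ g) ∧
    (∀ c : Fin (n - t) → MvPolynomial (Fin m) k,
        (∑ j, c j * tailFam gs t j) ∈ torsionSet h g →
          (∑ j, c j * tailFam gs t j) ∈ g ^ 2 ⊔ h) :=
  statement8_general hle hgen h1 h2
end
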